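/- Let H be a graph on [k], let ⋆ ∈ {ind, sub}, let ε ∈ (0,1) be fixed, and let (α,β) be either the vector with all α_i = 1/2 and all β_{ij} = 0, or the vector with all α_i = 0 and all β_{ij} = −1/d. Then Var( N^⋆(H; M_ε^{(α,β)}) ) / E[ N^⋆(H; M_ε^{(α,β)}) ]^2 → 0 as n → ∞. -/

import Mathlib

open MeasureTheory Filter Finset

noncomputable section

instance : Fact ((0:ℝ) < 1) := ⟨one_pos⟩

/-- The `d`-dimensional torus `ℝ^d/ℤ^d`, with the sup of coordinatewise circle distances. -/
abbrev Torus (d : ℕ) := Fin d → AddCircle (1 : ℝ)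

/-- Sample space of the GIRG on `n` vertices: weights, positions, and iid uniform
`[0,1]` coins deciding the presence of each potential edge. -/
abbrev GirgΩ (d n : ℕ) := (Fin n → ℝ) × (Fin n → Torus d) × (Sym2 (Fin n) → ℝ)

/-- The law of the randomness of the GIRG: iid weights with law `μW`, iid uniform positions
on the torus, iid uniform coins. -/
def girgMeasure (μW : Measure ℝ) (d n : ℕ) : Measure (GirgΩ d n) :=
  (Measure.pi fun _ : Fin n => μW).prod
    ((Measure.pi fun _ : Fin n => (volume : Measure (Torus d))).prod
      (Measure.pi fun _ : Sym2 (Fin n) => volume.restrict (Set.Icc (0:ℝ) 1)))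

/-- mean `μ = E[W]` of the weight distribution -/
def wMean (μW : Measure ℝ) : ℝ := ∫ x, x ∂μW

/-- Power-law tail assumption: `W ≥ 1` a.s. and `P(W > x) = c x^{1-τ} (1+o(1))` as `x → ∞`. -/
def WeightTail (τ c : ℝ) (μW : Measure ℝ) : Prop :=
  0 < c ∧ μW (Set.Iio 1) = 0 ∧
    Tendsto (fun x : ℝ => (μW (Set.Ioi x)).toReal / (c * x ^ (1 - τ))) atTop (nhds 1)

/-- GIRG connection probability `min(1, (w_u w_v / (n μ ‖x_u - x_v‖^d))^γ)`. -/
def connProb (γ μbar : ℝ) (d n : ℕ) (w : Fin n → ℝ) (x : Fin n → Torus d)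
    (u v : Fin n) : ℝ :=
  min 1 ((w u * w v / ((n : ℝ) * μbar * dist (x u) (x v) ^ d)) ^ γ)

/-- `u` and `v` are joined by an edge of the GIRG in outcome `ω`. -/
def girgEdge (γ μbar : ℝ) (d n : ℕ) (ω : GirgΩ d n) (u v : Fin n) : Prop :=
  u ≠ v ∧ ω.2.2 s(u, v) ≤ connProb γ μbar d n ω.1 ω.2.1 u v

/-- the window `[ε t, t/ε]` -/
def windowIcc (ε t : ℝ) : Set ℝ := Set.Icc (ε * t) (t / ε)

/-- The set `M_ε^{(α,β)}` of ordered `k`-tuples of distinct vertices with prescribed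
weights and inter-distances. -/
def Mset {k : ℕ} (ε : ℝ) (α : Fin k → ℝ) (β : Fin k → Fin k → ℝ) (d n : ℕ)
    (w : Fin n → ℝ) (x : Fin n → Torus d) : Set (Fin k → Fin n) :=
  {v | Function.Injective v ∧
    (∀ i, w (v i) ∈ windowIcc ε ((n : ℝ) ^ (α i))) ∧
    (∀ i j : Fin k, i < j → dist (x (v i)) (x (v j)) ∈ windowIcc ε ((n : ℝ) ^ (β i j)))}

/-- `N^{sub}(H; M_ε^{(α,β)})` -/
def nSubM {k : ℕ} (H : SimpleGraph (Fin k)) (γ μbar ε : ℝ) (α : Fin k → ℝ)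
    (β : Fin k → Fin k → ℝ) (d n : ℕ) (ω : GirgΩ d n) : ℕ :=
  Set.ncard {v : Fin k → Fin n | v ∈ Mset ε α β d n ω.1 ω.2.1 ∧
    ∀ i j : Fin k, H.Adj i j → girgEdge γ μbar d n ω (v i) (v j)}

/-- `N^{ind}(H; M_ε^{(α,β)})` -/
def nIndM {k : ℕ} (H : SimpleGraph (Fin k)) (γ μbar ε : ℝ) (α : Fin k → ℝ)
    (β : Fin k → Fin k → ℝ) (d n : ℕ) (ω : GirgΩ d n) : ℕ :=
  Set.ncard {v : Fin k → Fin n | v ∈ Mset ε α β d n ω.1 ω.2.1 ∧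
    ∀ i j : Fin k, i ≠ j → (H.Adj i j ↔ girgEdge γ μbar d n ω (v i) (v j))}

/-- `N^{sub}(H)` -/
def nSubTotal {k : ℕ} (H : SimpleGraph (Fin k)) (γ μbar : ℝ) (d n : ℕ)
    (ω : GirgΩ d n) : ℕ :=
  Set.ncard {v : Fin k → Fin n | Function.Injective v ∧
    ∀ i j : Fin k, H.Adj i j → girgEdge γ μbar d n ω (v i) (v j)}

/-- `N^{ind}(H)` -/
def nIndTotal {k : ℕ} (H : SimpleGraph (Fin k)) (γ μbar : ℝ) (d n : ℕ)
    (ω : GirgΩ d n) : ℕ :=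
  Set.ncard {v : Fin k → Fin n | Function.Injective v ∧
    ∀ i j : Fin k, i ≠ j → (H.Adj i j ↔ girgEdge γ μbar d n ω (v i) (v j))}

/-- `β` read as a symmetric matrix (only entries with `i < j` are meaningful). -/
def bsym {k : ℕ} (β : Fin k → Fin k → ℝ) (i j : Fin k) : ℝ := if i < j then β i j else β j i

/-- The feasible region `F`. -/
def Feasible (τ : ℝ) (d : ℕ) {k : ℕ} (α : Fin k → ℝ) (β : Fin k → Fin k → ℝ) : Prop :=
  (∀ i, α i ∈ Set.Icc (0 : ℝ) (1 / (τ - 1))) ∧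
  (∀ i j : Fin k, i < j → β i j ∈ Set.Icc (-(1 / (d : ℝ))) 0) ∧
  (∀ i j s : Fin k, i < j → s ≠ i → s ≠ j → β i j ≤ max (bsym β i s) (bsym β j s))

/-- `min_{i<j} β_{ij}` (with value `0 = sInf ∅` for the first vertex `j`,
which does not contribute). -/
def minBeta {k : ℕ} (β : Fin k → Fin k → ℝ) (j : Fin k) : ℝ :=
  sInf {x : ℝ | ∃ i, i < j ∧ x = β i j}

open scoped Classical in
/-- The exponent `f_H(α,β)`. -/
def fExp (τ γ : ℝ) (d : ℕ) {k : ℕ} (H : SimpleGraph (Fin k))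
    (α : Fin k → ℝ) (β : Fin k → Fin k → ℝ) : ℝ :=
  (k : ℝ) + (1 - τ) * ∑ i, α i + (d : ℝ) * ∑ j, minBeta β j +
    γ * ∑ p ∈ Finset.univ.filter (fun p : Fin k × Fin k => p.1 < p.2 ∧ H.Adj p.1 p.2),
        min (α p.1 + α p.2 - (d : ℝ) * β p.1 p.2 - 1) 0

/-- Extra constraints for the induced optimization problem:
`α_i + α_j ≤ 1 + d β_{ij}` for all non-edges. -/
def IndConstr (d : ℕ) {k : ℕ} (H : SimpleGraph (Fin k)) (α : Fin k → ℝ)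
    (β : Fin k → Fin k → ℝ) : Prop :=
  ∀ i j : Fin k, i < j → ¬H.Adj i j → α i + α j ≤ 1 + (d : ℝ) * β i j

/-- `(α,β)` is an optimal solution of the general optimization problem. -/
def IsOptimalSub (τ γ : ℝ) (d : ℕ) {k : ℕ} (H : SimpleGraph (Fin k))
    (α : Fin k → ℝ) (β : Fin k → Fin k → ℝ) : Prop :=
  Feasible τ d α β ∧
    ∀ α' β', Feasible τ d α' β' → fExp τ γ d H α' β' ≤ fExp τ γ d H α β

/-- `(α,β)` is an optimal solution of the induced optimization problem. -/
def IsOptimalInd (τ γ : ℝ) (d : ℕ) {k : ℕ} (H : SimpleGraph (Fin k))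
    (α : Fin k → ℝ) (β : Fin k → Fin k → ℝ) : Prop :=
  Feasible τ d α β ∧ IndConstr d H α β ∧
    ∀ α' β', Feasible τ d α' β' → IndConstr d H α' β' →
      fExp τ γ d H α' β' ≤ fExp τ γ d H α β

/-- the two kinds of subgraph counts -/
inductive StarKind | ind | sub

/-- `N^⋆(H; M_ε^{(α,β)})` -/
def starNM (s : StarKind) {k : ℕ} (H : SimpleGraph (Fin k)) (γ μbar ε : ℝ) (α : Fin k → ℝ)
    (β : Fin k → Fin k → ℝ) (d n : ℕ) (ω : GirgΩ d n) : ℕ :=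
  match s with
  | .sub => nSubM H γ μbar ε α β d n ω
  | .ind => nIndM H γ μbar ε α β d n ω

/-- `N^⋆(H)` -/
def starNTotal (s : StarKind) {k : ℕ} (H : SimpleGraph (Fin k)) (γ μbar : ℝ) (d n : ℕ)
    (ω : GirgΩ d n) : ℕ :=
  match s with
  | .sub => nSubTotal H γ μbar d n ω
  | .ind => nIndTotal H γ μbar d n ω

/-- optimality in the optimization problem corresponding to `⋆` -/
def starIsOptimal (s : StarKind) (τ γ : ℝ) (d : ℕ) {k : ℕ} (H : SimpleGraph (Fin k))
    (α : Fin k → ℝ) (β : Fin k → Fin k → ℝ) : Prop :=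
  match s with
  | .sub => IsOptimalSub τ γ d H α β
  | .ind => IsOptimalInd τ γ d H α β

/-- the optimal value `f_H^*` of the optimization problem corresponding to `⋆` -/
def starOptVal (s : StarKind) (τ γ : ℝ) (d : ℕ) {k : ℕ} (H : SimpleGraph (Fin k)) : ℝ :=
  match s with
  | .sub => sSup {x | ∃ α β, Feasible τ d α β ∧ x = fExp τ γ d H α β}
  | .ind => sSup {x | ∃ α β, Feasible τ d α β ∧ IndConstr d H α β ∧ x = fExp τ γ d H α β}

/-- `(α,β)` is the unique optimal solution (in the `α`-variables and the
`β`-variables with `i < j`). -/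
def UniquelyOptimal (s : StarKind) (τ γ : ℝ) (d : ℕ) {k : ℕ} (H : SimpleGraph (Fin k))
    (α : Fin k → ℝ) (β : Fin k → Fin k → ℝ) : Prop :=
  starIsOptimal s τ γ d H α β ∧
    ∀ α' β', starIsOptimal s τ γ d H α' β' →
      α' = α ∧ ∀ i j : Fin k, i < j → β' i j = β i j

/-!
The variance of the number of embedded tuples is carried by pairs of tuples sharing a vertex, so it
suffices to bound, for each `m` in `[k, 2k)`, the probability that two copies spread over `m`
vertices by a `b n m` with `n ^ m * b n m` negligible with respect to `(n ^ k p_n) ^ 2`, where `p_n`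
is the probability that `k` given vertices form a copy.

For weights of order `√n` at macroscopic distances, both probabilities are governed by the weights:
with `y = n P(W ≥ √n)`, which tends to infinity because `τ < 3`, `n ^ m * b n m` is of order `y ^ m`
and `n ^ k p_n` is of order `y ^ k`, unless the forbidden edges have probability one at all
admissible weights and distances, in which case `p_n = 0`.

For bounded weights at distances of order `ρ = n ^ (-1/d)`, averaging over translations roots a
configuration in a ball of radius `ρ`. Lifting to `ℝ ^ d` and rescaling by `ρ` then shows that
`n ^ k p_n` is exactly a constant multiple of `n`, while `n ^ m * b n m` is of order `n`.
-/

open ProbabilityTheory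
open scoped Topology ENNReal

section ProductMeasures

variable {ι κ κ' X : Type*} [Fintype ι] [Fintype κ] [Fintype κ'] [MeasurableSpace X]
  (ν : Measure X) [IsProbabilityMeasure ν]

lemma measurePreserving_comp_injective {f : κ → ι} (hf : f.Injective) :
    MeasurePreserving (fun x : ι → X => x ∘ f) (Measure.pi fun _ => ν)
      (Measure.pi fun _ => ν) := by
  refine ⟨by fun_prop, ?_⟩
  have hindep : iIndepFun (fun (j : κ) (x : ι → X) => x (f j))
      (Measure.pi fun _ => ν) :=
    (iIndepFun_pi (X := fun _ x => x) fun _ => aemeasurable_id).precomp hf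
  have hlaw (j : κ) : (Measure.pi fun _ : ι => ν).map (fun x => x (f j)) = ν :=
    (measurePreserving_eval (fun _ => ν) (f j)).map_eq
  have hjoint := (iIndepFun_iff_map_fun_eq_pi_map
    fun j => (measurable_pi_apply (f j)).aemeasurable).1 hindep
  simp only [hlaw] at hjoint
  exact hjoint

lemma measurePreserving_prodMk_comp {f : κ → ι} {g : κ' → ι} (hf : f.Injective)
    (hg : g.Injective) (hfg : Disjoint (Set.range f) (Set.range g)) :
    MeasurePreserving (fun x : ι → X => (x ∘ f, x ∘ g)) (Measure.pi fun _ => ν)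
      ((Measure.pi fun _ => ν).prod (Measure.pi fun _ => ν)) :=
  (measurePreserving_sumPiEquivProdPi fun _ => ν).comp <|
    measurePreserving_comp_injective ν <|
      hf.sumElim hg fun a b => Set.disjoint_range_iff.1 hfg a b

end ProductMeasures

lemma measurePreserving_prodProdProdComm {A A' B B' : Type*} [MeasurableSpace A]
    [MeasurableSpace A'] [MeasurableSpace B] [MeasurableSpace B'] (a : Measure A) (a' : Measure A')
    (b : Measure B) (b' : Measure B') [SFinite a] [SFinite a'] [SFinite b] [SFinite b'] :
    MeasurePreserving (fun p : (A × A') × (B × B') => ((p.1.1, p.2.1), (p.1.2, p.2.2)))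
      ((a.prod a').prod (b.prod b')) ((a.prod b).prod (a'.prod b')) := by
  have inner : MeasurePreserving (fun p : A' × (B × B') => (p.2.1, (p.1, p.2.2)))
      (a'.prod (b.prod b')) (b.prod (a'.prod b')) :=
    (measurePreserving_prodAssoc b a' b').comp <|
      (Measure.measurePreserving_swap.prod (.id b')).comp (measurePreserving_prodAssoc a' b b').symm
  exact (measurePreserving_prodAssoc a b (a'.prod b')).symm.comp <|
    ((MeasurePreserving.id a).prod inner).comp (measurePreserving_prodAssoc a a' (b.prod b'))

lemma measureReal_pi_forall_mem {ι X : Type*} [Fintype ι] [MeasurableSpace X]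
    (ν : Measure X) [IsProbabilityMeasure ν] (U : Finset ι) (S : Set X) :
    (Measure.pi fun _ : ι => ν).real {x | ∀ i ∈ U, x i ∈ S} = ν.real S ^ #U := by
  classical
  have hpi : {x : ι → X | ∀ i ∈ U, x i ∈ S} = Set.univ.pi fun i => if i ∈ U then S else .univ := by
    ext x
    simp only [Set.mem_ofPred_eq, Set.mem_univ_pi]
    exact forall_congr' fun i => by split_ifs with h <;> simp [h]
  rw [hpi, measureReal_def, Measure.pi_pi, ENNReal.toReal_prod]
  simp only [apply_ite ν, apply_ite ENNReal.toReal, measure_univ, ENNReal.toReal_one,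
    prod_ite_mem, univ_inter, prod_const, measureReal_def]

section Variance

variable {Ω ι : Type*} [MeasurableSpace Ω] {P : Measure Ω} [IsProbabilityMeasure P]

lemma memLp_indicator_one {A : Set Ω} (hA : MeasurableSet A) :
    MemLp (A.indicator fun _ => (1 : ℝ)) 2 P :=
  memLp_indicator_const 2 hA 1 (Or.inr (measure_ne_top _ _))

lemma covariance_indicator_one {A B : Set Ω} (hA : MeasurableSet A) (hB : MeasurableSet B) :
    cov[A.indicator fun _ => 1, B.indicator fun _ => 1; P] =
      P.real (A ∩ B) - P.real A * P.real B := by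
  have hmul : (A.indicator fun _ => (1 : ℝ)) * (B.indicator fun _ => 1) =
      (A ∩ B).indicator fun _ => 1 := (Set.inter_indicator_one (M₀ := ℝ)).symm
  rw [covariance_eq_sub (memLp_indicator_one hA) (memLp_indicator_one hB), hmul]
  simp [integral_indicator_const, hA, hB, hA.inter hB]

lemma variance_sum_indicator_le [Fintype ι] {A : ι → Set Ω} (hA : ∀ i, MeasurableSet (A i))
    {r : ι → ι → Prop} [DecidableRel r]
    (hr : ∀ i j, ¬ r i j → P.real (A i ∩ A j) = P.real (A i) * P.real (A j)) :
    Var[fun ω => ∑ i, (A i).indicator (fun _ => (1 : ℝ)) ω; P] ≤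
      ∑ p : ι × ι with r p.1 p.2, P.real (A p.1 ∩ A p.2) := by
  rw [variance_fun_sum fun i => memLp_indicator_one (hA i), ← Fintype.sum_prod_type', sum_filter]
  refine sum_le_sum fun p _ => ?_
  rw [covariance_indicator_one (hA _) (hA _)]
  split_ifs with h
  · exact sub_le_self _ (by positivity)
  · rw [hr _ _ h, sub_self]

end Variance

section Overlaps

variable {k n : ℕ}

/-- The set of vertices used by a pair of `k`-tuples of distinct vertices. The size of this set
governs both the number of such pairs and the probability that both tuples are counted. -/
def jointRange (v v' : Fin k ↪ Fin n) : Finset (Fin n) := univ.map v ∪ univ.map v'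

lemma card_jointRange_mem_Ico {v v' : Fin k ↪ Fin n}
    (h : ¬ Disjoint (Set.range v) (Set.range v')) : #(jointRange v v') ∈ Ico k (2 * k) := by
  have hinter : 0 < #(univ.map v ∩ univ.map v') := by
    rw [Set.not_disjoint_iff] at h
    obtain ⟨_, ⟨a, rfl⟩, b, hb⟩ := h
    exact card_pos.2 ⟨v a, mem_inter.2 ⟨by simp, by simp [← hb]⟩⟩
  have hsum := card_union_add_card_inter (univ.map v) (univ.map v')
  have hsub : #(univ.map v) ≤ #(jointRange v v') := card_le_card subset_union_left
  simp only [card_map, card_univ, Fintype.card_fin] at hsum hsub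
  rw [mem_Ico]
  exact ⟨hsub, by unfold jointRange; omega⟩

-- A pair of tuples is determined by an enumeration of its `m` vertices and two maps `[k] → [m]`.
lemma card_filter_card_jointRange_le (k n m : ℕ) :
    #{p : (Fin k ↪ Fin n) × (Fin k ↪ Fin n) | #(jointRange p.1 p.2) = m} ≤
      n ^ m * (m ^ k * m ^ k) := by
  let coePair (p : (Fin k ↪ Fin n) × (Fin k ↪ Fin n)) : (Fin k → Fin n) × (Fin k → Fin n) :=
    (p.1, p.2)
  let decode (q : (Fin m → Fin n) × (Fin k → Fin m) × (Fin k → Fin m)) :=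
    (q.1 ∘ q.2.1, q.1 ∘ q.2.2)
  have hinj : coePair.Injective := DFunLike.coe_injective.prodMap DFunLike.coe_injective
  have hsurj : image coePair {p | #(jointRange p.1 p.2) = m} ⊆ univ.image decode := by
    simp only [subset_iff, mem_image, mem_filter, mem_univ, true_and]
    rintro _ ⟨⟨v, v'⟩, hm, rfl⟩
    let e : jointRange v v' ≃ Fin m := equivFinOfCardEq hm
    refine ⟨(fun a => e.symm a, fun i => e ⟨v i, by simp [jointRange]⟩,
      fun i => e ⟨v' i, by simp [jointRange]⟩), ?_⟩
    ext i <;> simp [decode, coePair]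
  calc _ = _ := (card_image_of_injective _ hinj).symm
    _ ≤ _ := (card_le_card hsurj).trans card_image_le
    _ = _ := by simp

open scoped Classical in
lemma sum_card_jointRange_le {b : ℕ → ℝ} (hb : ∀ m, 0 ≤ b m) :
    ∑ p : (Fin k ↪ Fin n) × (Fin k ↪ Fin n) with ¬ Disjoint (Set.range p.1) (Set.range p.2),
        b #(jointRange p.1 p.2) ≤
      ∑ m ∈ Ico k (2 * k), (m ^ k * m ^ k : ℝ) * (n ^ m * b m) := by
  rw [← sum_fiberwise_of_maps_to fun p hp => card_jointRange_mem_Ico (mem_filter.1 hp).2]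
  refine sum_le_sum fun m _ => ?_
  rw [sum_congr rfl fun p hp => congrArg b (mem_filter.1 hp).2, sum_const, nsmul_eq_mul]
  have hcard : (#{p ∈ {p : (Fin k ↪ Fin n) × (Fin k ↪ Fin n) |
      ¬ Disjoint (Set.range p.1) (Set.range p.2)} | #(jointRange p.1 p.2) = m} : ℝ) ≤
      n ^ m * (m ^ k * m ^ k) := by
    exact_mod_cast (card_le_card (filter_subset_filter _ (subset_univ _))).trans
      (card_filter_card_jointRange_le k n m)
  calc _ ≤ (n ^ m * (m ^ k * m ^ k) : ℝ) * b m := mul_le_mul_of_nonneg_right hcard (hb m)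
    _ = _ := by ring

end Overlaps

lemma tendsto_div_sq_of_pow_bounds {ι : Type*} {l : Filter ι} {f g y : ι → ℝ} {A B : ℝ} {m k : ℕ}
    (hB : 0 < B) (hm : m < 2 * k) (hy : Tendsto y l atTop) (hf₀ : ∀ i, 0 ≤ f i)
    (hf : ∀ᶠ i in l, f i ≤ A * y i ^ m) (hg : ∀ᶠ i in l, B * y i ^ k ≤ g i) :
    Tendsto (fun i => f i / g i ^ 2) l (𝓝 0) := by
  have hlim : Tendsto (fun i => A / B ^ 2 * (y i ^ m / y i ^ (2 * k))) l (𝓝 0) := by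
    simpa using ((tendsto_pow_div_pow_atTop_zero hm).comp hy).const_mul (A / B ^ 2)
  refine squeeze_zero' (.of_forall fun i => div_nonneg (hf₀ i) (sq_nonneg _)) ?_ hlim
  filter_upwards [hf, hg, hy.eventually_gt_atTop 0] with i hfi hgi hyi
  calc f i / g i ^ 2 ≤ A * y i ^ m / (B * y i ^ k) ^ 2 :=
        div_le_div₀ ((hf₀ i).trans hfi) hfi (by positivity) (by gcongr)
    _ = A / B ^ 2 * (y i ^ m / y i ^ (2 * k)) := by
      rw [mul_pow, ← pow_mul, mul_comm k 2, mul_div_mul_comm]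

section Averaging

variable {ι X : Type*} [Fintype ι] [AddGroup X] [MeasurableSpace X] [MeasurableAdd₂ X]
  (ν : Measure X) [IsProbabilityMeasure ν] [ν.IsAddLeftInvariant] [ν.IsAddRightInvariant]

lemma pi_inter_eval_preimage_eq_mul {S : Set (ι → X)} (hS : MeasurableSet S)
    (hinv : ∀ x t, (fun i => x i + t) ∈ S ↔ x ∈ S) {B : Set X} (hB : MeasurableSet B) (i₀ : ι) :
    (Measure.pi fun _ => ν) (S ∩ {x | x i₀ ∈ B}) = (Measure.pi fun _ => ν) S * ν B := by
  set P : Measure (ι → X) := Measure.pi fun _ => ν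
  have heval (x : ι → X) : ν {t | x i₀ + t ∈ B} = ν B := measure_preimage_add ν (x i₀) B
  have htranslate (t : X) : P (S ∩ {x | x i₀ + t ∈ B}) = P (S ∩ {x | x i₀ ∈ B}) := by
    have hmeas : MeasurableSet (S ∩ {x : ι → X | x i₀ ∈ B}) :=
      hS.inter (measurable_pi_apply i₀ hB)
    rw [← (measurePreserving_pi _ _ fun _ : ι =>
      measurePreserving_add_right ν t).measure_preimage hmeas.nullMeasurableSet]
    congr 1
    ext x
    exact and_congr_left fun _ => (hinv x t).symm
  have hjoint : MeasurableSet {q : X × (ι → X) | q.2 ∈ S ∧ q.2 i₀ + q.1 ∈ B} :=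
    (measurable_snd hS).inter <|
      (show Measurable fun q : X × (ι → X) => q.2 i₀ + q.1 by fun_prop) hB
  calc P (S ∩ {x | x i₀ ∈ B}) = ∫⁻ t, P (S ∩ {x | x i₀ + t ∈ B}) ∂ν := by simp [htranslate]
    _ = ν.prod P {q | q.2 ∈ S ∧ q.2 i₀ + q.1 ∈ B} := (Measure.prod_apply hjoint).symm
    _ = ∫⁻ x, ν {t | x ∈ S ∧ x i₀ + t ∈ B} ∂P := Measure.prod_apply_symm hjoint
    _ = ∫⁻ x, S.indicator (fun _ => ν B) x ∂P := by
      refine lintegral_congr fun x => ?_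
      by_cases hx : x ∈ S <;> simp [hx, heval]
    _ = P S * ν B := by rw [lintegral_indicator_const hS, mul_comm]

end Averaging

lemma prod_prod_apply_eq_mul {A B B' C : Type*} [MeasurableSpace A] [MeasurableSpace B]
    [MeasurableSpace B'] [MeasurableSpace C] (a : Measure A) (b : Measure B) (b' : Measure B')
    (c : Measure C) [SFinite b] [SFinite b'] [SFinite c] {K : ℝ≥0∞} (hK : K ≠ ∞)
    {E : Set (A × B × C)} {E' : Set (A × B' × C)} (hE : MeasurableSet E) (hE' : MeasurableSet E')
    (h : ∀ x z, b {y | (x, y, z) ∈ E} = K * b' {y | (x, y, z) ∈ E'}) :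
    a.prod (b.prod c) E = K * a.prod (b'.prod c) E' := by
  have hfiber (x : A) : b.prod c (Prod.mk x ⁻¹' E) = K * b'.prod c (Prod.mk x ⁻¹' E') := by
    rw [Measure.prod_apply_symm (measurable_prodMk_left hE),
      Measure.prod_apply_symm (measurable_prodMk_left hE'), ← lintegral_const_mul' _ _ hK]
    exact lintegral_congr fun z => h x z
  rw [Measure.prod_apply hE, Measure.prod_apply hE', ← lintegral_const_mul' _ _ hK]
  exact lintegral_congr hfiber

section Restriction

variable {k n d : ℕ}

instance (d : ℕ) : IsProbabilityMeasure (volume : Measure (Torus d)) :=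
  haveI : IsProbabilityMeasure (volume : Measure (AddCircle (1 : ℝ))) :=
    ⟨by simp [AddCircle.measure_univ]⟩
  inferInstance

instance : IsProbabilityMeasure (volume.restrict (Set.Icc (0 : ℝ) 1)) := ⟨by simp⟩

instance (μW : Measure ℝ) [IsProbabilityMeasure μW] (d n : ℕ) :
    IsProbabilityMeasure (girgMeasure μW d n) := by
  unfold girgMeasure; infer_instance

/-- The randomness of a GIRG seen by the vertices of a tuple `v`. -/
def girgRestrict (v : Fin k ↪ Fin n) (ω : GirgΩ d n) : GirgΩ d k :=
  (ω.1 ∘ v, ω.2.1 ∘ v, ω.2.2 ∘ Sym2.map v)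

variable (μW : Measure ℝ) [IsProbabilityMeasure μW]

lemma measurePreserving_girgRestrict (v : Fin k ↪ Fin n) :
    MeasurePreserving (girgRestrict v) (girgMeasure μW d n) (girgMeasure μW d k) :=
  (measurePreserving_comp_injective _ v.injective).prod <|
    (measurePreserving_comp_injective _ v.injective).prod <|
      measurePreserving_comp_injective _ (Sym2.map.injective v.injective)

lemma disjoint_range_sym2Map {ι κ : Type*} {f g : κ → ι}
    (h : Disjoint (Set.range f) (Set.range g)) :
    Disjoint (Set.range (Sym2.map f)) (Set.range (Sym2.map g)) := by
  rw [Set.disjoint_range_iff] at h ⊢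
  intro e e' he
  obtain ⟨⟨a, b⟩, rfl⟩ := Quot.exists_rep e
  have hmem : f a ∈ Sym2.map g e' := he ▸ Sym2.mem_map.2 ⟨a, Sym2.mem_mk_left a b, rfl⟩
  obtain ⟨c, -, hc⟩ := Sym2.mem_map.1 hmem
  exact h a c hc.symm

lemma measurePreserving_prodMk_girgRestrict {v v' : Fin k ↪ Fin n}
    (h : Disjoint (Set.range v) (Set.range v')) :
    MeasurePreserving (fun ω : GirgΩ d n => (girgRestrict v ω, girgRestrict v' ω))
      (girgMeasure μW d n) ((girgMeasure μW d k).prod (girgMeasure μW d k)) :=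
  (measurePreserving_prodProdProdComm _ _ _ _).comp <|
    (measurePreserving_prodMk_comp _ v.injective v'.injective h).prod <|
      (measurePreserving_prodProdProdComm _ _ _ _).comp <|
        (measurePreserving_prodMk_comp _ v.injective v'.injective h).prod <|
          measurePreserving_prodMk_comp _ (Sym2.map.injective v.injective)
            (Sym2.map.injective v'.injective) (disjoint_range_sym2Map h)

variable {E : Set (GirgΩ d k)}

lemma measureReal_girgRestrict_preimage (hE : MeasurableSet E) (v : Fin k ↪ Fin n) :
    (girgMeasure μW d n).real (girgRestrict v ⁻¹' E) = (girgMeasure μW d k).real E :=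
  (measurePreserving_girgRestrict μW v).measureReal_preimage hE.nullMeasurableSet

lemma measureReal_girgRestrict_inter_of_disjoint (hE : MeasurableSet E) {v v' : Fin k ↪ Fin n}
    (h : Disjoint (Set.range v) (Set.range v')) :
    (girgMeasure μW d n).real (girgRestrict v ⁻¹' E ∩ girgRestrict v' ⁻¹' E) =
      (girgMeasure μW d k).real E * (girgMeasure μW d k).real E := by
  rw [← measureReal_prod_prod]
  exact (measurePreserving_prodMk_girgRestrict μW h).measureReal_preimage
    (hE.prod hE).nullMeasurableSet

end Restriction

section TupleCount

variable {k n d : ℕ}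

/-- The number of `k`-tuples of distinct vertices whose randomness lies in `E`. -/
def tupleCount (E : Set (GirgΩ d k)) (ω : GirgΩ d n) : ℝ :=
  ∑ v : Fin k ↪ Fin n, (girgRestrict v ⁻¹' E).indicator (fun _ => 1) ω

variable (μW : Measure ℝ) [IsProbabilityMeasure μW] {E : Set (GirgΩ d k)}

lemma integral_tupleCount (hE : MeasurableSet E) :
    ∫ ω, tupleCount E ω ∂girgMeasure μW d n =
      n.descFactorial k * (girgMeasure μW d k).real E := by
  have hmeas (v : Fin k ↪ Fin n) : MeasurableSet (girgRestrict v ⁻¹' E) :=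
    (measurePreserving_girgRestrict μW v).measurable hE
  unfold tupleCount
  rw [integral_finsetSum _ fun v _ => (integrable_const 1).indicator (hmeas v)]
  simp [integral_indicator_const, hmeas, measureReal_girgRestrict_preimage μW hE,
    Fintype.card_embedding_eq]

open scoped Classical in
lemma variance_tupleCount_le (hE : MeasurableSet E) :
    Var[fun ω => tupleCount E ω; girgMeasure μW d n] ≤
      ∑ p : (Fin k ↪ Fin n) × (Fin k ↪ Fin n) with ¬ Disjoint (Set.range p.1) (Set.range p.2),
        (girgMeasure μW d n).real (girgRestrict p.1 ⁻¹' E ∩ girgRestrict p.2 ⁻¹' E) :=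
  variance_sum_indicator_le (P := girgMeasure μW d n) (A := fun v => girgRestrict v ⁻¹' E)
    (r := fun v v' => ¬ Disjoint (Set.range v) (Set.range v'))
    (fun v => (measurePreserving_girgRestrict μW v).measurable hE)
    fun v v' h => by
      simp only [measureReal_girgRestrict_inter_of_disjoint μW hE (not_not.1 h),
        measureReal_girgRestrict_preimage μW hE]

/-- The variance of `X n` under `P n` is negligible with respect to the square of its mean. Where
the mean is zero the ratio is zero, by the convention on division. -/
def SelfAveraging {Ω : ℕ → Type*} [∀ n, MeasurableSpace (Ω n)] (P : ∀ n, Measure (Ω n))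
    (X : ∀ n, Ω n → ℝ) : Prop :=
  Tendsto (fun n => Var[X n; P n] / (∫ ω, X n ω ∂P n) ^ 2) atTop (𝓝 0)

theorem selfAveraging_tupleCount {E : ℕ → Set (GirgΩ d k)} (hE : ∀ n, MeasurableSet (E n))
    {b : ℕ → ℕ → ℝ} (hb : ∀ n m, 0 ≤ b n m)
    (hoverlap : ∀ᶠ n in atTop, ∀ v v' : Fin k ↪ Fin n, ¬ Disjoint (Set.range v) (Set.range v') →
      (girgMeasure μW d n).real (girgRestrict v ⁻¹' E n ∩ girgRestrict v' ⁻¹' E n) ≤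
        b n #(jointRange v v'))
    (hlim : ∀ m ∈ Ico k (2 * k), Tendsto (fun n : ℕ =>
      n ^ m * b n m / (n ^ k * (girgMeasure μW d k).real (E n)) ^ 2) atTop (𝓝 0)) :
    SelfAveraging (girgMeasure μW d) fun n ω => tupleCount (E n) ω := by
  classical
  set p : ℕ → ℝ := fun n => (girgMeasure μW d k).real (E n)
  have hcount : Tendsto (fun n : ℕ => (n ^ k / n.descFactorial k : ℝ) ^ 2) atTop (𝓝 1) := by
    have hequiv := (isEquivalent_descFactorial k).symm
    rw [Asymptotics.isEquivalent_iff_tendsto_one (by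
      filter_upwards [eventually_ge_atTop k] with n hn
      exact_mod_cast (Nat.descFactorial_pos.2 hn).ne')] at hequiv
    simpa using hequiv.pow 2
  have hsum : Tendsto (fun n : ℕ => ∑ m ∈ Ico k (2 * k), (m ^ k * m ^ k : ℝ) *
      (n ^ m * b n m / (n ^ k * p n) ^ 2)) atTop (𝓝 0) := by
    simpa using tendsto_finsetSum _ fun m hm => (hlim m hm).const_mul (m ^ k * m ^ k : ℝ)
  refine squeeze_zero' (.of_forall fun n => div_nonneg (variance_nonneg _ _) (sq_nonneg _)) ?_
    (by simpa using hcount.mul hsum)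
  filter_upwards [hoverlap, eventually_gt_atTop 0] with n hn hn0
  have hvar : Var[fun ω => tupleCount (E n) ω; girgMeasure μW d n] ≤
      ∑ m ∈ Ico k (2 * k), (m ^ k * m ^ k : ℝ) * (n ^ m * b n m) :=
    (variance_tupleCount_le μW (hE n)).trans <|
      (sum_le_sum fun q hq => hn _ _ (mem_filter.1 hq).2).trans (sum_card_jointRange_le (hb n))
  rw [integral_tupleCount μW (hE n)]
  calc _ ≤ (∑ m ∈ Ico k (2 * k), (m ^ k * m ^ k : ℝ) * (n ^ m * b n m)) /
        (n.descFactorial k * p n) ^ 2 := by gcongr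
    _ = (n ^ k / n.descFactorial k : ℝ) ^ 2 * (∑ m ∈ Ico k (2 * k), (m ^ k * m ^ k : ℝ) *
        (n ^ m * b n m / (n ^ k * p n) ^ 2)) := by
      simp only [mul_div_assoc', ← sum_div]
      field_simp

end TupleCount

section CopyEvent

variable {k n d : ℕ}

/-- The connection probability of two vertices of weights `a` and `b` at distance `r`, where `ν`
stands for the product `n μ` of the size of the graph and the mean weight. -/
def edgeProb (γ ν : ℝ) (d : ℕ) (a b r : ℝ) : ℝ := min 1 ((a * b / (ν * r ^ d)) ^ γ)

/-- The graph of the pairs which must not be edges in a copy of `H`. -/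
def StarKind.forbidden : StarKind → SimpleGraph (Fin k) → SimpleGraph (Fin k)
  | .sub, _ => ⊥
  | .ind, H => Hᶜ

lemma StarKind.disjoint_forbidden (s : StarKind) (H : SimpleGraph (Fin k)) :
    Disjoint H (s.forbidden H) := by
  cases s
  · exact disjoint_compl_right
  · exact disjoint_bot_right

/-- The matrix of distances between the points of a tuple. -/
def distMatrix {X : Type*} [Dist X] (x : Fin k → X) (i j : Fin k) : ℝ := dist (x i) (x j)

/-- `k` vertices with weights `w`, distance matrix `D` and coins `c` contain all edges of `H` and no
edge of `F`, with weights in the window around `t` and distances in the window around `r`. Taking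
the matrix `D` as a parameter lets the torus and `ℝ^d` share the notion. -/
structure Realizes (H F : SimpleGraph (Fin k)) (γ ν ε : ℝ) (d : ℕ) (t r : ℝ) (w : Fin k → ℝ)
    (D : Fin k → Fin k → ℝ) (c : Sym2 (Fin k) → ℝ) : Prop where
  weight_mem : ∀ i, w i ∈ windowIcc ε t
  dist_mem : ∀ i j, i ≠ j → D i j ∈ windowIcc ε r
  coin_le : ∀ i j, H.Adj i j → c s(i, j) ≤ edgeProb γ ν d (w i) (w j) (D i j)
  lt_coin : ∀ i j, F.Adj i j → edgeProb γ ν d (w i) (w j) (D i j) < c s(i, j)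

/-- The event that the `k` given vertices form a copy of `H` avoiding `F` with weights of order `t`
and distances of order `r`. -/
def copyEvent (H F : SimpleGraph (Fin k)) (γ ν ε : ℝ) (d : ℕ) (t r : ℝ) : Set (GirgΩ d k) :=
  {ω | Realizes H F γ ν ε d t r ω.1 (distMatrix ω.2.1) ω.2.2}

lemma realizes_iff {H F : SimpleGraph (Fin k)} {γ ν ε : ℝ} {t r : ℝ} {w : Fin k → ℝ}
    {D : Fin k → Fin k → ℝ} {c : Sym2 (Fin k) → ℝ} :
    Realizes H F γ ν ε d t r w D c ↔ (∀ i, w i ∈ windowIcc ε t) ∧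
      (∀ i j, i ≠ j → D i j ∈ windowIcc ε r) ∧
      (∀ i j, H.Adj i j → c s(i, j) ≤ edgeProb γ ν d (w i) (w j) (D i j)) ∧
      ∀ i j, F.Adj i j → edgeProb γ ν d (w i) (w j) (D i j) < c s(i, j) :=
  ⟨fun ⟨hw, hD, hH, hF⟩ => ⟨hw, hD, hH, hF⟩, fun ⟨hw, hD, hH, hF⟩ => ⟨hw, hD, hH, hF⟩⟩

lemma measurableSet_realizes (H F : SimpleGraph (Fin k)) (γ ν ε : ℝ) (d : ℕ) (t r : ℝ) :
    MeasurableSet {q : (Fin k → ℝ) × (Fin k → Fin k → ℝ) × (Sym2 (Fin k) → ℝ) |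
      Realizes H F γ ν ε d t r q.1 q.2.1 q.2.2} := by
  have hdist (i j : Fin k) : Measurable
      fun q : (Fin k → ℝ) × (Fin k → Fin k → ℝ) × (Sym2 (Fin k) → ℝ) => q.2.1 i j := by
    fun_prop
  have hprob (i j : Fin k) : Measurable
      fun q : (Fin k → ℝ) × (Fin k → Fin k → ℝ) × (Sym2 (Fin k) → ℝ) =>
        edgeProb γ ν d (q.1 i) (q.1 j) (q.2.1 i j) := by
    unfold edgeProb; fun_prop
  simp only [realizes_iff, Set.ofPred_and, Set.ofPred_forall, windowIcc]
  refine .inter (.iInter fun i => ?_)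
    (.inter (.iInter fun i => .iInter fun j => .iInter fun _ => ?_) (.inter
      (.iInter fun i => .iInter fun j => .iInter fun _ => ?_)
      (.iInter fun i => .iInter fun j => .iInter fun _ => ?_)))
  · exact measurable_fst.eval measurableSet_Icc
  · exact hdist i j measurableSet_Icc
  · exact measurableSet_le (by fun_prop) (hprob i j)
  · exact measurableSet_lt (hprob i j) (by fun_prop)

lemma measurable_distMatrix {X : Type*} [PseudoMetricSpace X] [SecondCountableTopology X]
    [MeasurableSpace X] [OpensMeasurableSpace X] :
    Measurable (distMatrix : (Fin k → X) → Fin k → Fin k → ℝ) :=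
  measurable_pi_lambda _ fun i => measurable_pi_lambda _ fun j =>
    (measurable_pi_apply i).dist (measurable_pi_apply j)

lemma measurableSet_copyEvent (H F : SimpleGraph (Fin k)) (γ ν ε : ℝ) (d : ℕ) (t r : ℝ) :
    MeasurableSet (copyEvent H F γ ν ε d t r) :=
  (measurable_fst.prodMk ((measurable_distMatrix.comp measurable_snd.fst).prodMk
    measurable_snd.snd)) (measurableSet_realizes H F γ ν ε d t r)

lemma girgEdge_iff (γ μbar : ℝ) (ω : GirgΩ d n) (v : Fin k ↪ Fin n) {i j : Fin k} (hij : i ≠ j) :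
    girgEdge γ μbar d n ω (v i) (v j) ↔ (girgRestrict v ω).2.2 s(i, j) ≤
      edgeProb γ (n * μbar) d ((girgRestrict v ω).1 i) ((girgRestrict v ω).1 j)
        (distMatrix (girgRestrict v ω).2.1 i j) :=
  and_iff_right (v.injective.ne hij)

lemma forall_lt_distMatrix_iff {X : Type*} [PseudoMetricSpace X] {x : Fin k → X} {p : ℝ → Prop} :
    (∀ i j, i < j → p (distMatrix x i j)) ↔ ∀ i j, i ≠ j → p (distMatrix x i j) := by
  refine ⟨fun h i j hij => ?_, fun h i j hij => h i j hij.ne⟩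
  rcases hij.lt_or_gt with hij | hij
  · exact h i j hij
  · simpa only [distMatrix, dist_comm] using h j i hij

lemma mem_Mset_iff {ε : ℝ} {α : Fin k → ℝ} {β : Fin k → Fin k → ℝ} {a b : ℝ}
    (hα : ∀ i, α i = a) (hβ : ∀ i j, i < j → β i j = b) (ω : GirgΩ d n) (v : Fin k ↪ Fin n) :
    ⇑v ∈ Mset ε α β d n ω.1 ω.2.1 ↔ (∀ i, (girgRestrict v ω).1 i ∈ windowIcc ε (n ^ a)) ∧
      ∀ i j, i ≠ j → distMatrix (girgRestrict v ω).2.1 i j ∈ windowIcc ε (n ^ b) := by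
  refine (and_iff_right v.injective).trans (and_congr ?_ (Iff.trans ?_
    (forall_lt_distMatrix_iff (p := (· ∈ windowIcc ε (n ^ b))))))
  · simp only [hα]; rfl
  · exact forall₃_congr fun i j hij => by rw [hβ i j hij]; rfl

lemma natCast_ncard_eq_tupleCount {S : Set (Fin k → Fin n)} {E : Set (GirgΩ d k)} {ω : GirgΩ d n}
    (hinj : ∀ v ∈ S, v.Injective) (h : ∀ v : Fin k ↪ Fin n, ⇑v ∈ S ↔ girgRestrict v ω ∈ E) :
    (S.ncard : ℝ) = tupleCount E ω := by
  classical
  have himage : S = (fun v : Fin k ↪ Fin n => ⇑v) ''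
      ↑({v | girgRestrict v ω ∈ E} : Finset (Fin k ↪ Fin n)) := by
    ext v
    simp only [← h, Set.mem_image, coe_filter, mem_univ, true_and, Set.mem_ofPred_eq]
    exact ⟨fun hv => ⟨⟨v, hinj v hv⟩, hv, rfl⟩, by rintro ⟨v, hv, rfl⟩; exact hv⟩
  rw [himage, Set.ncard_image_of_injective _ DFunLike.coe_injective, Set.ncard_coe_finset]
  simp [tupleCount, Set.indicator_apply]

lemma starNM_eq_tupleCount (s : StarKind) (H : SimpleGraph (Fin k)) (γ μbar ε : ℝ)
    {α : Fin k → ℝ} {β : Fin k → Fin k → ℝ} {a b : ℝ} (hα : ∀ i, α i = a)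
    (hβ : ∀ i j, i < j → β i j = b) (ω : GirgΩ d n) :
    (starNM s H γ μbar ε α β d n ω : ℝ) =
      tupleCount (copyEvent H (s.forbidden H) γ (n * μbar) ε d (n ^ a) (n ^ b)) ω := by
  cases s with
  | sub =>
    refine natCast_ncard_eq_tupleCount (fun v hv => hv.1.1) fun v => ⟨?_, ?_⟩
    · rintro ⟨hM, hH⟩
      obtain ⟨hw, hx⟩ := (mem_Mset_iff hα hβ ω v).1 hM
      exact ⟨hw, hx, fun i j hij => (girgEdge_iff γ μbar ω v hij.ne).1 (hH i j hij),
        fun i j hij => hij.elim⟩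
    · rintro ⟨hw, hx, hH, -⟩
      exact ⟨(mem_Mset_iff hα hβ ω v).2 ⟨hw, hx⟩,
        fun i j hij => (girgEdge_iff γ μbar ω v hij.ne).2 (hH i j hij)⟩
  | ind =>
    refine natCast_ncard_eq_tupleCount (fun v hv => hv.1.1) fun v => ⟨?_, ?_⟩
    · rintro ⟨hM, hH⟩
      obtain ⟨hw, hx⟩ := (mem_Mset_iff hα hβ ω v).1 hM
      refine ⟨hw, hx,
        fun i j hij => (girgEdge_iff γ μbar ω v hij.ne).1 ((hH i j hij.ne).1 hij), ?_⟩
      rintro i j ⟨hij, hnot⟩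
      exact not_le.1 fun hle => hnot ((hH i j hij).2 ((girgEdge_iff γ μbar ω v hij).2 hle))
    · rintro ⟨hw, hx, hH, hF⟩
      refine ⟨(mem_Mset_iff hα hβ ω v).2 ⟨hw, hx⟩, fun i j hij => ?_⟩
      rw [girgEdge_iff γ μbar ω v hij]
      refine ⟨hH i j, fun hle => ?_⟩
      by_contra hnot
      exact (hF i j ⟨hij, hnot⟩).not_ge hle

end CopyEvent

namespace WeightTail

variable {τ c a : ℝ} {μW : Measure ℝ}

lemma ae_one_le (hW : WeightTail τ c μW) : ∀ᵐ x ∂μW, 1 ≤ x := by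
  rw [ae_iff]
  simp only [not_le]
  exact hW.2.1

lemma tendsto_measureReal_Ioi_div (hW : WeightTail τ c μW) (ha : 0 < a) :
    Tendsto (fun t => μW.real (Set.Ioi (a * t)) / t ^ (1 - τ)) atTop (𝓝 (c * a ^ (1 - τ))) := by
  obtain ⟨hc, -, h⟩ := hW
  have hcomp := (h.comp (tendsto_id.const_mul_atTop ha)).mul_const (c * a ^ (1 - τ))
  rw [one_mul] at hcomp
  refine hcomp.congr' ?_
  filter_upwards [eventually_gt_atTop 0] with t ht
  have : 0 < a ^ (1 - τ) := by positivity
  simp only [Function.comp, id, Real.mul_rpow ha.le ht.le, measureReal_def]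
  field_simp

variable [IsProbabilityMeasure μW]

lemma eventually_le_measureReal_Icc {b : ℝ} (hW : WeightTail τ c μW) (hτ : 1 < τ) (ha : 0 < a)
    (hab : a < b) :
    ∃ C > 0, ∀ᶠ t in atTop, C * t ^ (1 - τ) ≤ μW.real (Set.Icc (a * t) (b * t)) := by
  have hlim := (hW.tendsto_measureReal_Ioi_div ha).sub
    (hW.tendsto_measureReal_Ioi_div (ha.trans hab))
  have hpos : 0 < c * a ^ (1 - τ) - c * b ^ (1 - τ) :=
    sub_pos.2 (mul_lt_mul_of_pos_left (Real.rpow_lt_rpow_of_neg ha hab (by linarith)) hW.1)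
  refine ⟨_, half_pos hpos, ?_⟩
  filter_upwards [hlim.eventually_const_lt (half_lt_self hpos), eventually_gt_atTop 0] with t ht ht0
  have hsplit : μW.real (Set.Ioi (a * t)) ≤
      μW.real (Set.Icc (a * t) (b * t)) + μW.real (Set.Ioi (b * t)) := by
    refine (measureReal_mono fun x (hx : a * t < x) => ?_).trans (measureReal_union_le _ _)
    exact (le_or_gt x (b * t)).imp (fun h => ⟨hx.le, h⟩) id
  rw [← sub_div, lt_div_iff₀ (by positivity)] at ht
  linarith

lemma eventually_measureReal_Ici_le (hW : WeightTail τ c μW) (ha : 0 < a) :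
    ∃ C > 0, ∀ᶠ t in atTop, μW.real (Set.Ici (a * t)) ≤ C * t ^ (1 - τ) := by
  have hlim := hW.tendsto_measureReal_Ioi_div (half_pos ha)
  have hc := hW.1
  refine ⟨c * (a / 2) ^ (1 - τ) + 1, by positivity, ?_⟩
  filter_upwards [hlim.eventually_lt_const (lt_add_one _), eventually_gt_atTop 0] with t ht ht0
  rw [div_lt_iff₀ (by positivity)] at ht
  refine (measureReal_mono fun x (hx : a * t ≤ x) => ?_).trans ht.le
  have : 0 < a * t := by positivity
  rw [Set.mem_Ioi]
  linarith

lemma integrable_id (hW : WeightTail τ c μW) (hτ : 2 < τ) : Integrable id μW := by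
  obtain ⟨C, -, hC⟩ := hW.eventually_measureReal_Ici_le one_pos
  obtain ⟨A, hA⟩ := eventually_atTop.1 hC
  set B := max A 1
  have hnonneg : 0 ≤ᵐ[μW] id := hW.ae_one_le.mono fun x hx => zero_le_one.trans hx
  refine ⟨by fun_prop, ?_⟩
  rw [hasFiniteIntegral_iff_ofReal hnonneg,
    lintegral_eq_lintegral_meas_lt μW hnonneg (by fun_prop),
    ← Set.Ioc_union_Ioi_eq_Ioi (zero_le_one.trans (le_max_right A 1))]
  refine (lintegral_union_le _ _ _).trans_lt (ENNReal.add_lt_top.2 ⟨?_, ?_⟩)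
  · calc _ ≤ ∫⁻ _ in Set.Ioc 0 B, 1 := lintegral_mono fun x => prob_le_one
      _ < ∞ := by simp
  · have htail : IntegrableOn (fun t : ℝ => C * t ^ (1 - τ)) (Set.Ioi B) :=
      (integrableOn_Ioi_rpow_of_lt (by linarith) (by positivity)).const_mul C
    refine (setLIntegral_mono' measurableSet_Ioi fun t (ht : B < t) => ?_).trans_lt
      htail.lintegral_lt_top
    rw [← ofReal_measureReal]
    refine ENNReal.ofReal_le_ofReal ((measureReal_mono fun x hx => ?_).trans
      (hA t ((le_max_left A 1).trans ht.le)))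
    simpa using le_of_lt hx

lemma wMean_pos (hW : WeightTail τ c μW) (hτ : 2 < τ) : 0 < wMean μW :=
  calc (0 : ℝ) < ∫ _, 1 ∂μW := by simp
    _ ≤ wMean μW := integral_mono_ae (integrable_const _) (hW.integrable_id hτ) hW.ae_one_le

end WeightTail

section EdgeProb

variable {γ ν a b a' b' r r' : ℝ} {d : ℕ}

lemma edgeProb_scale (γ ν : ℝ) (d : ℕ) (σ ρ a b r : ℝ) :
    edgeProb γ ν d (σ * a) (σ * b) (ρ * r) = edgeProb γ (ν * ρ ^ d / σ ^ 2) d a b r := by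
  have hscale : σ * a * (σ * b) / (ν * (ρ * r) ^ d) = a * b / (ν * ρ ^ d / σ ^ 2 * r ^ d) := by
    rw [div_mul_eq_mul_div, div_div_eq_mul_div]
    ring
  rw [edgeProb, edgeProb, hscale]

lemma edgeProb_mono (hγ : 0 ≤ γ) (hν : 0 ≤ ν) (ha : 0 ≤ a) (hb : 0 ≤ b) (haa' : a ≤ a')
    (hbb' : b ≤ b') (hr' : 0 < r') (hr'r : r' ≤ r) :
    edgeProb γ ν d a b r ≤ edgeProb γ ν d a' b' r' := by
  rcases hν.eq_or_lt with rfl | hν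
  · simp [edgeProb]
  · have := hr'.trans_le hr'r
    have := ha.trans haa'
    have := hb.trans hbb'
    unfold edgeProb
    gcongr

lemma edgeProb_pos (hν : 0 < ν) (ha : 0 < a) (hb : 0 < b) (hr : 0 < r) :
    0 < edgeProb γ ν d a b r :=
  lt_min one_pos (by positivity)

lemma edgeProb_eq_one (hγ : 0 ≤ γ) (hr : 0 < ν * r ^ d) (h : ν * r ^ d ≤ a * b) :
    edgeProb γ ν d a b r = 1 :=
  min_eq_left (Real.one_le_rpow ((one_le_div hr).2 h) hγ)

end EdgeProb

section Scaling

variable {k : ℕ} {H F : SimpleGraph (Fin k)} {γ ν ε t r : ℝ} {d : ℕ}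

lemma mul_mem_windowIcc_iff {σ x : ℝ} (hσ : 0 < σ) :
    σ * x ∈ windowIcc ε (σ * t) ↔ x ∈ windowIcc ε t := by
  simp only [windowIcc, Set.mem_Icc, mul_left_comm ε, mul_div_assoc,
    mul_le_mul_iff_right₀ hσ]

lemma realizes_scale_iff {σ ρ : ℝ} (hσ : 0 < σ) (hρ : 0 < ρ) {w : Fin k → ℝ}
    {D : Fin k → Fin k → ℝ} {c : Sym2 (Fin k) → ℝ} :
    Realizes H F γ ν ε d (σ * t) (ρ * r) (fun i => σ * w i) (fun i j => ρ * D i j) c ↔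
      Realizes H F γ (ν * ρ ^ d / σ ^ 2) ε d t r w D c := by
  simp only [realizes_iff, mul_mem_windowIcc_iff hσ, mul_mem_windowIcc_iff hρ, edgeProb_scale]

end Scaling

section Macroscopic

variable {k d : ℕ} {H F : SimpleGraph (Fin k)} {γ μ ε θ : ℝ}

/-- The tuples of points at macroscopic distances for which `μ` times the `d`-th power of the
distance exceeds `θ` on the edges of `F`. Two vertices of weights `a √n` and `b √n` at such points
are allowed not to be adjacent once `a b ≤ θ`. -/
def spreadPositions (F : SimpleGraph (Fin k)) (μ ε θ : ℝ) (d : ℕ) : Set (Fin k → Torus d) :=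
  {x | (∀ i j, i ≠ j → distMatrix x i j ∈ windowIcc ε 1) ∧
    ∀ i j, F.Adj i j → θ < μ * distMatrix x i j ^ d}

lemma exists_lt_spreadPositions_ne_zero {P : Measure (Fin k → Torus d)}
    (h : P (spreadPositions F μ ε θ d) ≠ 0) : ∃ θ' > θ, P (spreadPositions F μ ε θ' d) ≠ 0 := by
  have hcover : spreadPositions F μ ε θ d ⊆
      ⋃ j : ℕ, spreadPositions F μ ε (θ + 1 / (j + 1)) d := by
    rintro x ⟨hdist, hF⟩
    have hlim : Tendsto (fun j : ℕ => θ + 1 / ((j : ℝ) + 1)) atTop (𝓝 θ) := by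
      simpa using tendsto_one_div_add_atTop_nhds_zero_nat.const_add θ
    have hev : ∀ᶠ j : ℕ in atTop, ∀ i i', F.Adj i i' →
        θ + 1 / ((j : ℝ) + 1) < μ * distMatrix x i i' ^ d := by
      simp only [eventually_all]
      exact fun i i' hii' => hlim.eventually_lt_const (hF i i' hii')
    obtain ⟨j, hj⟩ := hev.exists
    exact Set.mem_iUnion.2 ⟨j, hdist, hj⟩
  obtain ⟨j, hj⟩ := exists_measure_pos_of_not_measure_iUnion_null fun h0 =>
    h (measure_mono_null hcover h0)
  exact ⟨_, lt_add_of_pos_right θ (by positivity), hj.ne'⟩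

lemma Realizes.mem_spreadPositions (hγ : 0 ≤ γ) (hμ : 0 < μ) (hε : 0 < ε) {w : Fin k → ℝ}
    {x : Fin k → Torus d} {c : Sym2 (Fin k) → ℝ}
    (h : Realizes H F γ μ ε d 1 1 w (distMatrix x) c) (hc : ∀ e, c e ≤ 1) :
    x ∈ spreadPositions F μ ε (ε ^ 2) d := by
  refine ⟨h.dist_mem, fun i j hij => lt_of_not_ge fun hle => ?_⟩
  have hw (i) : ε ≤ w i := by simpa using (h.weight_mem i).1
  have hd : ε ≤ distMatrix x i j := by simpa using (h.dist_mem i j hij.ne).1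
  have := hε.trans_le hd
  have hone : edgeProb γ μ d (w i) (w j) (distMatrix x i j) = 1 :=
    edgeProb_eq_one hγ (by positivity) <| hle.trans <| by
      rw [sq]; exact mul_le_mul (hw i) (hw j) hε.le (hε.le.trans (hw i))
  exact ((h.lt_coin i j hij).trans_le (hc _)).ne hone

lemma ae_coin_le_one {ι : Type*} [Fintype ι] :
    ∀ᵐ c ∂Measure.pi fun _ : ι => (volume : Measure ℝ).restrict (Set.Icc 0 1), ∀ e, c e ≤ 1 :=
  ae_all_iff.2 fun e => (Measure.quasiMeasurePreserving_eval
    (fun _ => (volume : Measure ℝ).restrict (Set.Icc 0 1)) e).ae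
      ((ae_restrict_mem measurableSet_Icc).mono fun _ hx => hx.2)

variable (μW : Measure ℝ) [IsProbabilityMeasure μW]

lemma copyEvent_eq_realizes_one {t : ℝ} (ht : 0 < t) : copyEvent H F γ (t ^ 2 * μ) ε d t 1 =
    {ω | Realizes H F γ μ ε d 1 1 (fun i => t⁻¹ * ω.1 i) (distMatrix ω.2.1) ω.2.2} := by
  ext ω
  have hscale := realizes_scale_iff (H := H) (F := F) (γ := γ) (ν := t ^ 2 * μ) (ε := ε) (t := 1)
    (r := 1) (d := d) ht one_pos (w := fun i => t⁻¹ * ω.1 i) (D := distMatrix ω.2.1) (c := ω.2.2)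
  have hμ : t ^ 2 * μ / t ^ 2 = μ := by field_simp
  simp only [mul_one, one_mul, one_pow, hμ, mul_inv_cancel_left₀ ht.ne'] at hscale
  exact hscale

lemma measureReal_copyEvent_eq_zero (hγ : 0 ≤ γ) (hμ : 0 < μ) (hε : 0 < ε) {t : ℝ} (ht : 0 < t)
    (h : volume (spreadPositions F μ ε (ε ^ 2) d) = 0) :
    (girgMeasure μW d k).real (copyEvent H F γ (t ^ 2 * μ) ε d t 1) = 0 := by
  rw [copyEvent_eq_realizes_one ht, measureReal_eq_zero_iff]
  have hpos : ∀ᵐ ω ∂girgMeasure μW d k, ω.2.1 ∉ spreadPositions F μ ε (ε ^ 2) d :=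
    (Measure.quasiMeasurePreserving_fst.comp Measure.quasiMeasurePreserving_snd).ae
      (measure_eq_zero_iff_ae_notMem.1 h)
  have hcoin : ∀ᵐ ω ∂girgMeasure μW d k, ∀ e, ω.2.2 e ≤ 1 :=
    (Measure.quasiMeasurePreserving_snd.comp Measure.quasiMeasurePreserving_snd).ae ae_coin_le_one
  rw [measure_eq_zero_iff_ae_notMem]
  filter_upwards [hpos, hcoin] with ω hω hc hreal
  exact hω (hreal.mem_spreadPositions hγ hμ hε hc)

/-- Coins at most `a` on the edges of `H` and above `b` off them. -/
def coinBox (H : SimpleGraph (Fin k)) (a b : ℝ) : Set (Sym2 (Fin k) → ℝ) :=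
  {c | (∀ e ∈ H.edgeSet, c e ≤ a) ∧ ∀ e ∉ H.edgeSet, b < c e}

lemma coinBox_measure_ne_zero {a b : ℝ} (ha : 0 < a) (hb : b < 1) :
    (Measure.pi fun _ : Sym2 (Fin k) => (volume : Measure ℝ).restrict (Set.Icc 0 1))
      (coinBox H a b) ≠ 0 := by
  classical
  have hbox : coinBox H a b =
      Set.univ.pi fun e => if e ∈ H.edgeSet then Set.Iic a else Set.Ioi b := by
    ext c
    simp only [coinBox, Set.mem_ofPred_eq, Set.mem_univ_pi, ← forall_and]
    exact forall_congr' fun e => by split_ifs with he <;> simp [he]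
  rw [hbox, Measure.pi_pi, prod_ne_zero_iff]
  intro e _
  split_ifs
  · rw [Measure.restrict_apply measurableSet_Iic, Set.inter_comm]
    refine (measure_mono (μ := volume) (s := Set.Icc 0 (min a 1)) fun x hx => ?_).trans_lt'
      ?_ |>.ne'
    · exact ⟨⟨hx.1, hx.2.trans (min_le_right a 1)⟩, hx.2.trans (min_le_left a 1)⟩
    · simpa using ha
  · rw [Measure.restrict_apply measurableSet_Ioi, Set.inter_comm]
    refine (measure_mono (μ := volume) (s := Set.Ioc (max 0 b) 1) fun x hx => ?_).trans_lt'
      ?_ |>.ne'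
    · exact ⟨⟨(le_max_left 0 b).trans hx.1.le, hx.2⟩, (le_max_right 0 b).trans_lt hx.1⟩
    · simpa using hb

lemma realizes_of_mem_coinBox (hγ : 0 ≤ γ) (hμ : 0 < μ) (hε : 0 < ε) (hθ : 0 < θ)
    (hHF : Disjoint H F) {l : ℝ} (hl : l ≤ 1 / ε) {w : Fin k → ℝ} {x : Fin k → Torus d}
    {c : Sym2 (Fin k) → ℝ} (hw : ∀ i, w i ∈ Set.Icc ε l) (hx : x ∈ spreadPositions F μ ε θ d)
    (hc : c ∈ coinBox H (edgeProb γ μ d ε ε (1 / ε)) ((l ^ 2 / θ) ^ γ)) :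
    Realizes H F γ μ ε d 1 1 w (distMatrix x) c := by
  have hdist {i j : Fin k} (hij : i ≠ j) :
      0 < distMatrix x i j ∧ distMatrix x i j ≤ 1 / ε := by
    have := hx.1 i j hij
    rw [windowIcc, mul_one] at this
    exact ⟨hε.trans_le this.1, this.2⟩
  refine ⟨fun i => ⟨by simpa using (hw i).1, (hw i).2.trans hl⟩, hx.1, fun i j hij => ?_,
    fun i j hij => ?_⟩
  · exact (hc.1 _ hij).trans (edgeProb_mono hγ hμ.le hε.le hε.le (hw i).1 (hw j).1
      (hdist hij.ne).1 (hdist hij.ne).2)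
  · refine lt_of_le_of_lt ((min_le_right _ _).trans ?_)
      (hc.2 s(i, j) fun hH => hHF.le_bot (show (H ⊓ F).Adj i j from ⟨hH, hij⟩))
    have hwi := hε.trans_le (hw i).1
    have hwj := hε.trans_le (hw j).1
    have hd := (hdist hij.ne).1
    have hl0 := hwi.le.trans (hw i).2
    rw [sq]
    gcongr
    exacts [(hw i).2, (hw j).2, (hx.2 i j hij).le]

lemma exists_pow_le_measureReal_copyEvent (hγ : 0 < γ) (hμ : 0 < μ) (hε : 0 < ε)
    (hHF : Disjoint H F) {l : ℝ} (hεl : ε < l) (hl : l ≤ 1 / ε) (hlθ : l ^ 2 < θ)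
    (h : volume (spreadPositions F μ ε θ d) ≠ 0) :
    ∃ κ > 0, ∀ t > 0, κ * μW.real (Set.Icc (ε * t) (l * t)) ^ k ≤
      (girgMeasure μW d k).real (copyEvent H F γ (t ^ 2 * μ) ε d t 1) := by
  have hl0 : 0 < l := hε.trans hεl
  have hθ : 0 < θ := (sq_nonneg l).trans_lt hlθ
  set C : Set (Sym2 (Fin k) → ℝ) := coinBox H (edgeProb γ μ d ε ε (1 / ε)) ((l ^ 2 / θ) ^ γ)
  have hC := coinBox_measure_ne_zero (H := H)
    (edgeProb_pos (γ := γ) (d := d) hμ hε hε (one_div_pos.2 hε))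
    (Real.rpow_lt_one (by positivity) ((div_lt_one hθ).2 hlθ) hγ)
  refine ⟨_, mul_pos (ENNReal.toReal_pos h (measure_ne_top _ _))
    (ENNReal.toReal_pos hC (measure_ne_top _ _)), fun t ht => ?_⟩
  have hbox : {w : Fin k → ℝ | ∀ i ∈ univ, w i ∈ Set.Icc (ε * t) (l * t)} ×ˢ
      (spreadPositions F μ ε θ d ×ˢ C) ⊆ copyEvent H F γ (t ^ 2 * μ) ε d t 1 := by
    rintro ω ⟨hw, hx, hc⟩
    rw [copyEvent_eq_realizes_one ht]
    refine realizes_of_mem_coinBox hγ.le hμ hε hθ hHF hl (fun i => ?_) hx hc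
    rw [inv_mul_eq_div, Set.mem_Icc, le_div_iff₀ ht, div_le_iff₀ ht]
    exact hw i (mem_univ i)
  refine le_trans (le_of_eq ?_) (measureReal_mono hbox)
  rw [girgMeasure, measureReal_prod_prod, measureReal_prod_prod, measureReal_pi_forall_mem,
    card_univ, Fintype.card_fin, mul_comm]
  rfl

lemma measureReal_inter_copyEvent_le {n : ℕ} (v v' : Fin k ↪ Fin n) (ν t r : ℝ) :
    (girgMeasure μW d n).real (girgRestrict v ⁻¹' copyEvent H F γ ν ε d t r ∩
      girgRestrict v' ⁻¹' copyEvent H F γ ν ε d t r) ≤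
      μW.real (Set.Ici (ε * t)) ^ #(jointRange v v') := by
  have hsub : girgRestrict v ⁻¹' copyEvent H F γ ν ε d t r ∩
      girgRestrict v' ⁻¹' copyEvent H F γ ν ε d t r ⊆
      Prod.fst ⁻¹' {w : Fin n → ℝ | ∀ u ∈ jointRange v v', w u ∈ Set.Ici (ε * t)} := by
    rintro ω ⟨h, h'⟩ u hu
    simp only [jointRange, mem_union, Finset.mem_map, mem_univ, true_and] at hu
    obtain ⟨i, rfl⟩ | ⟨i, rfl⟩ := hu
    exacts [(h.weight_mem i).1, (h'.weight_mem i).1]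
  have hmeas : MeasurableSet {w : Fin n → ℝ | ∀ u ∈ jointRange v v', w u ∈ Set.Ici (ε * t)} := by
    simp only [Set.ofPred_forall]
    exact .iInter fun u => .iInter fun _ => measurable_pi_apply u measurableSet_Ici
  calc _ ≤ _ := measureReal_mono hsub
    _ = _ := measurePreserving_fst.measureReal_preimage hmeas.nullMeasurableSet
    _ = _ := measureReal_pi_forall_mem μW _ _

lemma tendsto_mul_sqrt_rpow_atTop {τ : ℝ} (hτ : τ < 3) :
    Tendsto (fun n : ℕ => (n : ℝ) * ((n : ℝ) ^ (1 / 2 : ℝ)) ^ (1 - τ)) atTop atTop := by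
  have hpow : Tendsto (fun n : ℕ => (n : ℝ) ^ ((3 - τ) / 2)) atTop atTop :=
    (tendsto_rpow_atTop (by linarith)).comp tendsto_natCast_atTop_atTop
  refine hpow.congr' ?_
  filter_upwards with n
  rw [← Real.rpow_mul n.cast_nonneg, ← Real.rpow_one_add' n.cast_nonneg (by linarith)]
  congr 1
  ring

lemma tendsto_overlap_div_sq_of_spreadPositions_ne_zero {τ c : ℝ} (hτ : τ ∈ Set.Ioo 1 3)
    (hγ : 0 < γ) (hμ : 0 < μ) (hW : WeightTail τ c μW) (hHF : Disjoint H F)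
    (hε : ε ∈ Set.Ioo 0 1) (h : volume (spreadPositions F μ ε (ε ^ 2) d) ≠ 0) {m : ℕ}
    (hm : m < 2 * k) :
    Tendsto (fun n : ℕ => n ^ m * μW.real (Set.Ici (ε * n ^ (1 / 2 : ℝ))) ^ m / (n ^ k *
      (girgMeasure μW d k).real (copyEvent H F γ (n * μ) ε d (n ^ (1 / 2 : ℝ)) 1)) ^ 2)
      atTop (𝓝 0) := by
  obtain ⟨θ, hθ, hvol⟩ := exists_lt_spreadPositions_ne_zero h
  obtain ⟨l, hεl, hl⟩ := _root_.exists_between <| lt_min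
    (hε.2.trans (one_lt_one_div hε.1 hε.2)) (Real.lt_sqrt_of_sq_lt hθ)
  have hlθ : l ^ 2 < θ := (Real.lt_sqrt (hε.1.trans hεl).le).1 (hl.trans_le (min_le_right _ _))
  obtain ⟨κ, hκ, hlower⟩ := exists_pow_le_measureReal_copyEvent μW hγ hμ hε.1 hHF hεl
    (hl.le.trans (min_le_left _ _)) hlθ hvol
  obtain ⟨A, -, hA⟩ := hW.eventually_measureReal_Ici_le hε.1
  obtain ⟨B, hB, hBw⟩ := hW.eventually_le_measureReal_Icc hτ.1 hε.1 hεl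
  have hsqrt : Tendsto (fun n : ℕ => (n : ℝ) ^ (1 / 2 : ℝ)) atTop atTop :=
    (tendsto_rpow_atTop one_half_pos).comp tendsto_natCast_atTop_atTop
  refine tendsto_div_sq_of_pow_bounds (A := A ^ m) (B := κ * B ^ k) (by positivity) hm
    (tendsto_mul_sqrt_rpow_atTop hτ.2) (fun n => by positivity) ?_ ?_
  · filter_upwards [hsqrt.eventually hA] with n hn
    rw [← mul_pow, ← mul_pow, mul_left_comm]
    gcongr
  · filter_upwards [hsqrt.eventually hBw, hsqrt.eventually_gt_atTop 0] with n hn ht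
    have hcopy := hlower _ ht
    rw [← Real.sqrt_eq_rpow, Real.sq_sqrt n.cast_nonneg, Real.sqrt_eq_rpow] at hcopy
    calc κ * B ^ k * (n * ((n : ℝ) ^ (1 / 2 : ℝ)) ^ (1 - τ)) ^ k
        = n ^ k * (κ * (B * ((n : ℝ) ^ (1 / 2 : ℝ)) ^ (1 - τ)) ^ k) := by ring
      _ ≤ _ := by gcongr; exact le_trans (by gcongr) hcopy

theorem selfAveraging_copyEvent_macroscopic {τ c : ℝ} (hτ : τ ∈ Set.Ioo 1 3) (hγ : 0 < γ)
    (hμ : 0 < μ) (hW : WeightTail τ c μW) (hHF : Disjoint H F) (hε : ε ∈ Set.Ioo 0 1) :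
    SelfAveraging (girgMeasure μW d) fun n ω =>
      tupleCount (copyEvent H F γ (n * μ) ε d (n ^ (1 / 2 : ℝ)) 1) ω := by
  refine selfAveraging_tupleCount μW (fun n => measurableSet_copyEvent ..)
    (b := fun n m => μW.real (Set.Ici (ε * n ^ (1 / 2 : ℝ))) ^ m) (fun n m => by positivity)
    (.of_forall fun n v v' _ => measureReal_inter_copyEvent_le μW v v' _ _ _) fun m hm => ?_
  by_cases h : volume (spreadPositions F μ ε (ε ^ 2) d) = 0
  · refine tendsto_const_nhds.congr' ?_
    filter_upwards [eventually_gt_atTop 0] with n hn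
    have hzero := measureReal_copyEvent_eq_zero (H := H) μW hγ.le hμ hε.1
      (Real.sqrt_pos.2 (Nat.cast_pos.2 hn)) h
    rw [Real.sq_sqrt n.cast_nonneg, Real.sqrt_eq_rpow] at hzero
    rw [hzero, mul_zero, sq, mul_zero, div_zero]
  · exact tendsto_overlap_div_sq_of_spreadPositions_ne_zero μW hτ hγ hμ hW hHF hε h
      (mem_Ico.1 hm).2

end Macroscopic

section Torus

variable {ι : Type*} {d k : ℕ}

/-- The projection of `ℝ^d` to the torus, applied to each point of a tuple. -/
def torusMk (y : ι → Fin d → ℝ) : ι → Torus d := fun i j => y i j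

/-- Tuples of points of the cube `(-1/2, 1/2]^d`, a fundamental domain of the torus. -/
def fundamentalCubes (ι : Type*) (d : ℕ) : Set (ι → Fin d → ℝ) :=
  Set.univ.pi fun _ => Set.univ.pi fun _ => Set.Ioc (-(1 / 2)) (-(1 / 2) + 1)

lemma norm_torus_coe {z : Fin d → ℝ} (hz : ∀ j, |z j| ≤ 1 / 2) :
    ‖(fun j => (z j : AddCircle (1 : ℝ)) : Torus d)‖ = ‖z‖ := by
  have hcoord (j : Fin d) : ‖(z j : AddCircle (1 : ℝ))‖₊ = ‖z j‖₊ :=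
    NNReal.eq ((AddCircle.norm_coe_eq_abs_iff 1 one_ne_zero).2 (by simpa using hz j))
  simp only [Pi.norm_def, hcoord]

lemma norm_torusMk {y : ι → Fin d → ℝ} (hy : y ∈ fundamentalCubes ι d) (i : ι) :
    ‖torusMk y i‖ = ‖y i‖ := by
  refine norm_torus_coe fun j => ?_
  obtain ⟨hlo, hhi⟩ := hy i trivial j trivial
  exact abs_le.2 ⟨hlo.le, by linarith⟩

lemma mem_fundamentalCubes {y : ι → Fin d → ℝ} (hy : ∀ i, ‖y i‖ ≤ 1 / 4) :
    y ∈ fundamentalCubes ι d := by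
  intro i _ j _
  obtain ⟨hlo, hhi⟩ := abs_le.1 ((norm_le_pi_norm (y i) j).trans (hy i))
  exact ⟨by linarith, by linarith⟩

lemma distMatrix_torusMk {y : Fin k → Fin d → ℝ} (hy : ∀ i, ‖y i‖ ≤ 1 / 4) :
    distMatrix (torusMk y) = distMatrix y := by
  ext i j
  have hdiff : torusMk y i - torusMk y j =
      (fun l => (((y i - y j) l : ℝ) : AddCircle (1 : ℝ)) : Torus d) := by
    ext l; simp [torusMk]
  rw [distMatrix, distMatrix, dist_eq_norm, dist_eq_norm, hdiff]
  exact norm_torus_coe fun l => (norm_le_pi_norm (y i - y j) l).trans <|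
    (norm_sub_le _ _).trans (by linarith [hy i, hy j])

lemma distMatrix_add_const (x : Fin k → Torus d) (t : Torus d) :
    distMatrix (fun i => x i + t) = distMatrix x := by
  ext i j
  exact dist_add_right _ _ _

lemma norm_le_of_distMatrix_le {V : Type*} [SeminormedAddCommGroup V] {x : Fin k → V} {i₀ : Fin k}
    {r R : ℝ} (hR : 0 ≤ R) (hxR : ∀ i, i ≠ i₀ → distMatrix x i i₀ ≤ R) (h₀ : ‖x i₀‖ ≤ r)
    (i : Fin k) : ‖x i‖ ≤ r + R := by
  have hdist : dist (x i) (x i₀) ≤ R := by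
    by_cases hi : i = i₀
    · rwa [hi, dist_self]
    · exact hxR i hi
  have htri := dist_triangle (x i) (x i₀) 0
  rw [dist_zero_right, dist_zero_right] at htri
  linarith

lemma volume_closedBall_torus (x : Torus d) {r : ℝ} (hr : 0 ≤ r) (hr' : r ≤ 1 / 2) :
    volume (Metric.closedBall x r) = ENNReal.ofReal (2 * r) ^ d := by
  rw [closedBall_pi _ hr, volume_pi_pi]
  simp [AddCircle.volume_closedBall, min_eq_right (show 2 * r ≤ 1 by linarith)]

variable [Fintype ι]

lemma measureReal_forall_dist_le (U : Finset ι) (i₀ : ι) {r : ℝ} (hr : 0 < r) (hr' : r ≤ 1 / 4) :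
    (volume : Measure (ι → Torus d)).real {x | ∀ i ∈ U, dist (x i) (x i₀) ≤ r} ≤
      ((4 * r) ^ d) ^ #U / (2 * r) ^ d := by
  have hmeas : MeasurableSet {x : ι → Torus d | ∀ i ∈ U, dist (x i) (x i₀) ≤ r} := by
    simp only [Set.ofPred_forall]
    exact .iInter fun i => .iInter fun _ => measurableSet_le (by fun_prop) measurable_const
  have havg := pi_inter_eval_preimage_eq_mul (volume : Measure (Torus d)) hmeas
    (fun x t => by simp [dist_add_right])
    (Metric.isClosed_closedBall (x := 0) (ε := r)).measurableSet i₀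
  have hsub : {x : ι → Torus d | ∀ i ∈ U, dist (x i) (x i₀) ≤ r} ∩
      {x | x i₀ ∈ Metric.closedBall 0 r} ⊆ {x | ∀ i ∈ U, x i ∈ Metric.closedBall 0 (2 * r)} := by
    rintro x ⟨hx, hx₀⟩ i hi
    rw [Metric.mem_closedBall, two_mul]
    exact (dist_triangle _ (x i₀) _).trans (add_le_add (hx i hi) hx₀)
  rw [volume_closedBall_torus 0 hr.le (by linarith)] at havg
  have havg' := congrArg ENNReal.toReal havg
  rw [ENNReal.toReal_mul, ENNReal.toReal_pow, ENNReal.toReal_ofReal (by positivity)] at havg'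
  rw [le_div_iff₀ (by positivity)]
  refine havg'.symm.trans_le ((measureReal_mono hsub).trans_eq ?_)
  rw [measureReal_pi_forall_mem, measureReal_def,
    volume_closedBall_torus 0 (by positivity) (by linarith), ENNReal.toReal_pow,
    ENNReal.toReal_ofReal (by positivity)]
  ring

lemma measurePreserving_torusMk :
    MeasurePreserving (torusMk (ι := ι) (d := d)) (volume.restrict (fundamentalCubes ι d)) := by
  have hpoint : MeasurePreserving (fun (z : Fin d → ℝ) j => (z j : AddCircle (1 : ℝ)))
      (volume.restrict (Set.univ.pi fun _ => Set.Ioc (-(1 / 2)) (-(1 / 2) + 1))) volume := by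
    rw [volume_pi, Measure.restrict_pi_pi]
    exact measurePreserving_pi _ _ fun _ => AddCircle.measurePreserving_mk 1 (-(1 / 2))
  rw [fundamentalCubes, volume_pi, Measure.restrict_pi_pi]
  exact measurePreserving_pi _ _ fun _ => hpoint

lemma volume_torusMk_preimage {A : Set (ι → Torus d)} (hA : MeasurableSet A) :
    volume (torusMk ⁻¹' A ∩ fundamentalCubes ι d) = volume A := by
  have hcubes : MeasurableSet (fundamentalCubes ι d) :=
    .univ_pi fun _ => .univ_pi fun _ => measurableSet_Ioc
  rw [← measurePreserving_torusMk.measure_preimage hA.nullMeasurableSet,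
    Measure.restrict_apply' hcubes]

/-- Averaging over translations roots the configuration in the ball of radius `r`; it then fits into
a fundamental domain of the torus. -/
lemma volume_distMatrix_mem_mul {N : Set (Fin k → Fin k → ℝ)} (hN : MeasurableSet N) {i₀ : Fin k}
    {r R : ℝ} (hr : 0 ≤ r) (hR : 0 ≤ R) (hrR : r + R ≤ 1 / 4)
    (hNR : ∀ D ∈ N, ∀ i, i ≠ i₀ → D i i₀ ≤ R) :
    volume {x : Fin k → Torus d | distMatrix x ∈ N} * ENNReal.ofReal (2 * r) ^ d =
      volume {y : Fin k → Fin d → ℝ | distMatrix y ∈ N ∧ ‖y i₀‖ ≤ r} := by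
  have hmeas : MeasurableSet {x : Fin k → Torus d | distMatrix x ∈ N} := measurable_distMatrix hN
  have hball := (Metric.isClosed_closedBall (x := (0 : Torus d)) (ε := r)).measurableSet
  have havg := pi_inter_eval_preimage_eq_mul (volume : Measure (Torus d)) hmeas
    (fun x t => by rw [Set.mem_ofPred_eq, distMatrix_add_const]; rfl) hball i₀
  rw [volume_closedBall_torus 0 hr (by linarith), ← volume_pi] at havg
  have hroot : MeasurableSet {x : Fin k → Torus d | x i₀ ∈ Metric.closedBall 0 r} :=
    measurable_pi_apply i₀ hball
  rw [← havg, ← volume_torusMk_preimage (hmeas.inter hroot)]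
  congr 1
  ext y
  simp only [Set.mem_inter_iff, Set.mem_preimage, Set.mem_ofPred_eq, mem_closedBall_zero_iff]
  refine ⟨fun ⟨⟨hy, h₀⟩, hcube⟩ => ?_, fun ⟨hy, h₀⟩ => ?_⟩
  · have hsmall (i) : ‖y i‖ ≤ 1 / 4 :=
      (norm_torusMk hcube i).symm.trans_le ((norm_le_of_distMatrix_le hR (hNR _ hy) h₀ i).trans hrR)
    rw [← norm_torusMk hcube, ← distMatrix_torusMk hsmall]
    exact ⟨hy, h₀⟩
  · have hsmall (i) : ‖y i‖ ≤ 1 / 4 :=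
      (norm_le_of_distMatrix_le hR (hNR _ hy) h₀ i).trans hrR
    have hcube := mem_fundamentalCubes hsmall
    rw [distMatrix_torusMk hsmall, norm_torusMk hcube]
    exact ⟨⟨hy, h₀⟩, hcube⟩

end Torus

section Microscopic

variable {k d : ℕ}

lemma distMatrix_smul {ρ : ℝ} (hρ : 0 ≤ ρ) (y : Fin k → Fin d → ℝ) :
    distMatrix (ρ • y) = ρ • distMatrix y := by
  ext i j
  simp [distMatrix, dist_smul₀, abs_of_nonneg hρ]

lemma volume_smul_distMatrix_mem {M : Set (Fin k → Fin k → ℝ)} (hM : MeasurableSet M) {i₀ : Fin k}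
    {ρ R : ℝ} (hρ : 0 < ρ) (hR : 0 ≤ R) (hρR : ρ * (1 + R) ≤ 1 / 4)
    (hMR : ∀ D ∈ M, ∀ i, i ≠ i₀ → D i i₀ ≤ R) :
    volume {x : Fin k → Torus d | ρ⁻¹ • distMatrix x ∈ M} =
      ENNReal.ofReal ((ρ ^ d) ^ k / (2 * ρ) ^ d) *
        volume {y : Fin k → Fin d → ℝ | distMatrix y ∈ M ∧ ‖y i₀‖ ≤ 1} := by
  have hroot := volume_distMatrix_mem_mul (d := d) (N := (ρ⁻¹ • ·) ⁻¹' M)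
    (measurable_const_smul ρ⁻¹ hM) (i₀ := i₀) hρ.le (mul_nonneg hρ.le hR)
    (by linarith) fun D hD i hi => (inv_mul_le_iff₀ hρ).1 (hMR _ hD i hi)
  have hscale : {y : Fin k → Fin d → ℝ | distMatrix y ∈ (ρ⁻¹ • ·) ⁻¹' M ∧ ‖y i₀‖ ≤ ρ} =
      (ρ⁻¹ • ·) ⁻¹' {y : Fin k → Fin d → ℝ | distMatrix y ∈ M ∧ ‖y i₀‖ ≤ 1} := by
    ext y
    simp only [Set.mem_preimage, Set.mem_ofPred_eq, distMatrix_smul (inv_nonneg.2 hρ.le),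
      Pi.smul_apply, norm_smul, norm_inv, Real.norm_of_nonneg hρ.le, inv_mul_le_iff₀ hρ, mul_one]
  have hjac : |(ρ⁻¹ ^ Module.finrank ℝ (Fin k → Fin d → ℝ))⁻¹| = (ρ ^ d) ^ k := by
    rw [inv_pow, inv_inv, abs_of_pos (by positivity), ← pow_mul]
    simp [Module.finrank_pi_fintype, mul_comm]
  rw [hscale, Measure.addHaar_preimage_smul volume (inv_ne_zero hρ.ne'), hjac] at hroot
  have hball : ENNReal.ofReal (2 * ρ) ^ d = ENNReal.ofReal ((2 * ρ) ^ d) :=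
    (ENNReal.ofReal_pow (by positivity) d).symm
  rw [hball] at hroot
  have hball₀ : ENNReal.ofReal ((2 * ρ) ^ d) ≠ 0 := (ENNReal.ofReal_pos.2 (by positivity)).ne'
  rw [ENNReal.ofReal_div_of_pos (by positivity), ← ENNReal.mul_div_right_comm,
    ← hroot, ENNReal.mul_div_cancel_right hball₀ ENNReal.ofReal_ne_top]
  rfl

variable {H F : SimpleGraph (Fin k)} {γ ν ε t : ℝ}

/-- The tuples of weights, points of `ℝ^d` and coins which form a copy of `H` avoiding `F` with
weights of order `t` and distances of order one, and whose point `i₀` lies in the unit ball. -/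
def rootedCopies (H F : SimpleGraph (Fin k)) (γ ν ε : ℝ) (d : ℕ) (t : ℝ) (i₀ : Fin k) :
    Set ((Fin k → ℝ) × (Fin k → Fin d → ℝ) × (Sym2 (Fin k) → ℝ)) :=
  {ω | Realizes H F γ ν ε d t 1 ω.1 (distMatrix ω.2.1) ω.2.2 ∧ ‖ω.2.1 i₀‖ ≤ 1}

lemma measurableSet_rootedCopies (i₀ : Fin k) :
    MeasurableSet (rootedCopies H F γ ν ε d t i₀) :=
  ((measurable_fst.prodMk ((measurable_distMatrix.comp measurable_snd.fst).prodMk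
    measurable_snd.snd)) (measurableSet_realizes H F γ ν ε d t 1)).inter
      (measurableSet_le (f := fun ω : (Fin k → ℝ) × (Fin k → Fin d → ℝ) × (Sym2 (Fin k) → ℝ) =>
        ‖ω.2.1 i₀‖) (by fun_prop) measurable_const)

/-- The analogue of `girgMeasure` for points of `ℝ^d` distributed according to Lebesgue measure. -/
def euclideanGirgMeasure (μW : Measure ℝ) (d k : ℕ) :
    Measure ((Fin k → ℝ) × (Fin k → Fin d → ℝ) × (Sym2 (Fin k) → ℝ)) :=
  (Measure.pi fun _ => μW).prod
    (volume.prod (Measure.pi fun _ => volume.restrict (Set.Icc (0 : ℝ) 1)))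

variable (μW : Measure ℝ)

lemma girgMeasure_copyEvent_eq (i₀ : Fin k) (hε : 0 < ε) {ρ : ℝ} (hρ : 0 < ρ)
    (hρε : ρ * (1 + 1 / ε) ≤ 1 / 4) :
    girgMeasure μW d k (copyEvent H F γ ν ε d t ρ) =
      ENNReal.ofReal ((ρ ^ d) ^ k / (2 * ρ) ^ d) *
        euclideanGirgMeasure μW d k (rootedCopies H F γ (ν * ρ ^ d) ε d t i₀) := by
  refine prod_prod_apply_eq_mul _ _ _ _ ENNReal.ofReal_ne_top (measurableSet_copyEvent ..)
    (measurableSet_rootedCopies i₀) fun w c => ?_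
  have hM : MeasurableSet {D | Realizes H F γ (ν * ρ ^ d) ε d t 1 w D c} :=
    (by fun_prop : Measurable fun D : Fin k → Fin k → ℝ => (w, D, c))
      (measurableSet_realizes H F γ (ν * ρ ^ d) ε d t 1)
  refine Eq.trans (congrArg _ ?_) (volume_smul_distMatrix_mem hM hρ (one_div_pos.2 hε).le hρε
    fun D hD i hi => (hD.dist_mem i i₀ hi).2)
  ext x
  have hscale := realizes_scale_iff (H := H) (F := F) (γ := γ) (ν := ν) (ε := ε) (t := t) (r := 1)
    (d := d) one_pos hρ (w := w) (D := ρ⁻¹ • distMatrix x) (c := c)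
  simpa [copyEvent, hρ.ne'] using hscale

lemma rpow_neg_one_div_pow (hd : d ≠ 0) (n : ℕ) :
    ((n : ℝ) ^ (-(1 / (d : ℝ)))) ^ d = (n : ℝ)⁻¹ := by
  rw [Real.rpow_neg n.cast_nonneg, inv_pow, one_div, Real.rpow_inv_natCast_pow n.cast_nonneg hd]

lemma tendsto_rpow_neg_one_div (hd : d ≠ 0) :
    Tendsto (fun n : ℕ => (n : ℝ) ^ (-(1 / (d : ℝ)))) atTop (𝓝 0) :=
  (tendsto_rpow_neg_atTop (by positivity)).comp tendsto_natCast_atTop_atTop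

lemma exists_eventually_pow_mul_measureReal_copyEvent_eq {μ : ℝ} (hd : d ≠ 0) (i₀ : Fin k)
    (hε : 0 < ε) : ∃ G : ℝ, 0 ≤ G ∧ ∀ᶠ n : ℕ in atTop, (n : ℝ) ^ k * (girgMeasure μW d k).real
      (copyEvent H F γ (n * μ) ε d t (n ^ (-(1 / (d : ℝ))))) = G * n := by
  refine ⟨(euclideanGirgMeasure μW d k).real (rootedCopies H F γ μ ε d t i₀) / 2 ^ d,
    by positivity, ?_⟩
  have hsmall : ∀ᶠ n : ℕ in atTop, (n : ℝ) ^ (-(1 / (d : ℝ))) * (1 + 1 / ε) ≤ 1 / 4 :=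
    ((tendsto_rpow_neg_one_div hd).mul_const _).eventually_le_const (by norm_num)
  filter_upwards [hsmall, eventually_gt_atTop 0] with n hn hn₀
  have hn₀ : (0 : ℝ) < n := Nat.cast_pos.2 hn₀
  rw [measureReal_def, girgMeasure_copyEvent_eq μW i₀ hε (by positivity) hn, ENNReal.toReal_mul,
    ENNReal.toReal_ofReal (by positivity), mul_pow, rpow_neg_one_div_pow hd, measureReal_def,
    mul_right_comm (n : ℝ), mul_inv_cancel₀ hn₀.ne', one_mul, inv_pow]
  field_simp

variable [IsProbabilityMeasure μW]

lemma measureReal_inter_copyEvent_le_of_not_disjoint {n : ℕ} {v v' : Fin k ↪ Fin n}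
    (hvv' : ¬ Disjoint (Set.range v) (Set.range v')) {r : ℝ} (hε : 0 < ε) (hr : 0 < r)
    (hrε : r / ε ≤ 1 / 4) :
    (girgMeasure μW d n).real (girgRestrict v ⁻¹' copyEvent H F γ ν ε d t r ∩
      girgRestrict v' ⁻¹' copyEvent H F γ ν ε d t r) ≤
      ((4 * (r / ε)) ^ d) ^ #(jointRange v v') / (2 * (r / ε)) ^ d := by
  obtain ⟨_, ⟨a, rfl⟩, ⟨b, hab⟩⟩ := Set.not_disjoint_iff.1 hvv'
  have hdist {v : Fin k ↪ Fin n} {ω : GirgΩ d n}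
      (h : girgRestrict v ω ∈ copyEvent H F γ ν ε d t r) (i j : Fin k) :
      dist (ω.2.1 (v i)) (ω.2.1 (v j)) ≤ r / ε := by
    by_cases hij : i = j
    · rw [hij, dist_self]; positivity
    · exact (h.dist_mem i j hij).2
  have hsub : girgRestrict v ⁻¹' copyEvent H F γ ν ε d t r ∩
      girgRestrict v' ⁻¹' copyEvent H F γ ν ε d t r ⊆ (fun ω => ω.2.1) ⁻¹'
        {x | ∀ u ∈ jointRange v v', dist (x u) (x (v a)) ≤ r / ε} := by
    rintro ω ⟨h, h'⟩ u hu
    simp only [jointRange, mem_union, Finset.mem_map, mem_univ, true_and] at hu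
    obtain ⟨i, rfl⟩ | ⟨i, rfl⟩ := hu
    · exact hdist h i a
    · rw [← hab]; exact hdist h' i b
  have hmeas : MeasurableSet {x : Fin n → Torus d |
      ∀ u ∈ jointRange v v', dist (x u) (x (v a)) ≤ r / ε} := by
    simp only [Set.ofPred_forall]
    exact .iInter fun u => .iInter fun _ => measurableSet_le (by fun_prop) measurable_const
  have hpos : MeasurePreserving (fun ω : GirgΩ d n => ω.2.1) (girgMeasure μW d n) volume :=
    measurePreserving_fst.comp measurePreserving_snd
  calc _ ≤ _ := measureReal_mono hsub
    _ = _ := hpos.measureReal_preimage hmeas.nullMeasurableSet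
    _ ≤ _ := measureReal_forall_dist_le _ _ (by positivity) hrε

theorem selfAveraging_copyEvent_microscopic {μ : ℝ} (hd : d ≠ 0) (hε : 0 < ε) :
    SelfAveraging (girgMeasure μW d) fun n ω =>
      tupleCount (copyEvent H F γ (n * μ) ε d t (n ^ (-(1 / (d : ℝ))))) ω := by
  set ρ : ℕ → ℝ := fun n => (n : ℝ) ^ (-(1 / (d : ℝ)))
  refine selfAveraging_tupleCount μW (fun n => measurableSet_copyEvent ..)
    (b := fun n m => ((4 * (ρ n / ε)) ^ d) ^ m / (2 * (ρ n / ε)) ^ d) (fun n m => by positivity)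
    ?_ fun m hm => ?_
  · have hsmall : ∀ᶠ n : ℕ in atTop, ρ n / ε ≤ 1 / 4 :=
      ((tendsto_rpow_neg_one_div hd).div_const ε).eventually_le_const (by norm_num)
    filter_upwards [hsmall, eventually_gt_atTop 0] with n hn _ v v' hvv'
    exact measureReal_inter_copyEvent_le_of_not_disjoint μW hvv' hε (by positivity) hn
  · have hk : 0 < k := by have := mem_Ico.1 hm; omega
    obtain ⟨G, hG, hcopy⟩ := exists_eventually_pow_mul_measureReal_copyEvent_eq (H := H) (F := F)
      (γ := γ) (t := t) (μ := μ) μW hd ⟨0, hk⟩ hε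
    rcases hG.eq_or_lt with rfl | hG
    · refine tendsto_const_nhds.congr' (hcopy.mono fun n hn => ?_)
      beta_reduce
      rw [hn, zero_mul, sq, mul_zero, div_zero]
    · refine tendsto_div_sq_of_pow_bounds (y := fun n : ℕ => (n : ℝ)) (m := 1) (k := 1)
        (A := ((4 / ε) ^ d) ^ m / (2 / ε) ^ d) hG one_lt_two tendsto_natCast_atTop_atTop
        (fun n => by positivity) ?_ (hcopy.mono fun n hn => by rw [hn, pow_one])
      filter_upwards [eventually_gt_atTop 0] with n _
      have hρ (a : ℝ) : (a * (ρ n / ε)) ^ d = (a / ε) ^ d * (n : ℝ)⁻¹ := by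
        rw [← rpow_neg_one_div_pow hd, ← mul_pow]; ring
      refine le_of_eq ?_
      rw [hρ, hρ, mul_pow, inv_pow]
      field_simp

end Microscopic

theorem girg_count_selfaveraging_general {k d : ℕ} (hd : d ≠ 0) {τ γ c μ ε : ℝ}
    (hτ : τ ∈ Set.Ioo 1 3) (hγ : 0 < γ) (hμ : 0 < μ) (μW : Measure ℝ) [IsProbabilityMeasure μW]
    (hW : WeightTail τ c μW) (H : SimpleGraph (Fin k)) (s : StarKind) (hε : ε ∈ Set.Ioo 0 1)
    {α : Fin k → ℝ} {β : Fin k → Fin k → ℝ}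
    (hαβ : ((∀ i, α i = 1 / 2) ∧ ∀ i j, i < j → β i j = 0) ∨
      ((∀ i, α i = 0) ∧ ∀ i j, i < j → β i j = -(1 / (d : ℝ)))) :
    SelfAveraging (girgMeasure μW d) fun n ω => (starNM s H γ μ ε α β d n ω : ℝ) := by
  rcases hαβ with ⟨hα, hβ⟩ | ⟨hα, hβ⟩
  · simpa only [starNM_eq_tupleCount s H γ μ ε hα hβ, Real.rpow_zero] using
      selfAveraging_copyEvent_macroscopic μW hτ hγ hμ hW (s.disjoint_forbidden H) hε
  · simpa only [starNM_eq_tupleCount s H γ μ ε hα hβ, Real.rpow_zero] using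
      selfAveraging_copyEvent_microscopic μW hd hε.1

/-- Lemma `selfaveraging`: when `(α,β) ≡ (1/2, 0)` or
`(α,β) ≡ (0, -1/d)`, the count `N^⋆(H; M_ε^{(α,β)})` is self-averaging:
`Var(N)/E[N]² → 0`. -/
theorem girg_count_selfaveraging
    {k d : ℕ} (hd : 1 ≤ d) (τ γ c : ℝ) (hτ : τ ∈ Set.Ioo (2:ℝ) 3) (hγ : 1 < γ)
    (μW : Measure ℝ) [IsProbabilityMeasure μW] (hW : WeightTail τ c μW)
    (H : SimpleGraph (Fin k)) (s : StarKind)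
    (ε : ℝ) (hε : ε ∈ Set.Ioo (0:ℝ) 1)
    (α : Fin k → ℝ) (β : Fin k → Fin k → ℝ)
    (hval : ((∀ i, α i = 1/2) ∧ (∀ i j : Fin k, i < j → β i j = 0)) ∨
            ((∀ i, α i = 0) ∧ (∀ i j : Fin k, i < j → β i j = -(1 / (d:ℝ))))) :
    Tendsto (fun n : ℕ =>
        ProbabilityTheory.variance
            (fun ω => (starNM s H γ (wMean μW) ε α β d n ω : ℝ)) (girgMeasure μW d n) /
          (∫ ω, (starNM s H γ (wMean μW) ε α β d n ω : ℝ) ∂(girgMeasure μW d n)) ^ 2)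
      atTop (nhds 0) :=
  girg_count_selfaveraging_general (Nat.one_le_iff_ne_zero.1 hd) ⟨by linarith [hτ.1], hτ.2⟩
    (one_pos.trans hγ) (hW.wMean_pos hτ.1) μW hW H s hε hval

end
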